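/- arXiv:2412.08105 — 7 statements merged into one kernel-verified Lean document; each statement's English description precedes it below -/
import Mathlib

section
/- Let G be an infinite abelian group generated by a finite subset S with 1 ∉ S and S = S⁻¹. Then the Cayley graph Cay(G;S) has a two-way hamiltonian path; that is, there exists a bijection v : ℤ → G such that v(i)⁻¹·v(i+1) ∈ S for every i ∈ ℤ. -/
/-!
An infinite finitely generated abelian group has a generator `s₀ ∈ S` of infinite order, because a
finitely generated torsion abelian group is finite. The powers of `s₀` form a two-way hamiltonian
path of the subgroup `⟨s₀⟩`. The remaining generators are adjoined one at a time
(`IsTraced.sup_zpowers`): if `v : ℤ → H` is a two-way hamiltonian path of a subgroup `H` and `s ∈ S`,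
then every element of `H⟨s⟩` is uniquely `v a * s ^ b` with `a ∈ ℤ` and `b ∈ J`, where
`J = {0, …, k - 1}` if `k` is the least positive exponent with `s ^ k ∈ H`, and `J = ℤ` if there is
none. Grid neighbours `(a, b)` are sent to neighbours in the Cayley graph, so it suffices to find a
two-way hamiltonian path of the grid `ℤ × J`.

For the strip `ℤ × {0, …, k - 1}` one snakes through the columns (`exists_gridPath_strip`). For the
plane (`exists_gridPath_plane`), the half-plane `y ≥ 0` has a one-way hamiltonian path from the
origin, running through the U-shaped levels `max |x| y = k` in alternating directions; it is joined
to its mirror image in `y ≤ -1`.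
-/

namespace CayleyHam

/-- Adjacency in the square grid `ℤ × ℤ`. -/
def GridAdj (p q : ℤ × ℤ) : Prop :=
  (q.2 = p.2 ∧ (q.1 = p.1 + 1 ∨ q.1 = p.1 - 1)) ∨ (q.1 = p.1 ∧ (q.2 = p.2 + 1 ∨ q.2 = p.2 - 1))

/-! ### The strip -/

lemma exists_gridPath_strip (k : ℤ) (hk : 0 < k) : ∃ u : ℤ → ℤ × ℤ, Function.Injective u ∧
    (∀ p, p ∈ Set.range u ↔ 0 ≤ p.2 ∧ p.2 < k) ∧ ∀ i, GridAdj (u i) (u (i + 1)) := by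
  refine ⟨fun i => (i / k, if (i / k) % 2 = 0 then i % k else k - 1 - i % k), ?_, ?_, ?_⟩
  · intro i j h
    simp only [Prod.mk.injEq] at h
    obtain ⟨h1, h2⟩ := h
    rw [h1] at h2
    have h3 : i % k = j % k := by split_ifs at h2 <;> omega
    rw [← Int.mul_ediv_add_emod i k, ← Int.mul_ediv_add_emod j k, h1, h3]
  · rintro ⟨a, b⟩
    simp only [Set.mem_range, Prod.mk.injEq]
    constructor
    · rintro ⟨i, -, rfl⟩
      have h1 := Int.emod_nonneg i hk.ne'
      have h2 := Int.emod_lt_of_pos i hk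
      split_ifs <;> omega
    · rintro ⟨h1, h2⟩
      have key : ∀ r, 0 ≤ r → r < k → (r + k * a) / k = a ∧ (r + k * a) % k = r := by
        intro r hr0 hr1
        refine ⟨?_, ?_⟩
        · rw [Int.add_mul_ediv_left _ _ hk.ne', Int.ediv_eq_zero_of_lt hr0 hr1, zero_add]
        · rw [Int.add_mul_emod_self_left, Int.emod_eq_of_lt hr0 hr1]
      by_cases ha : a % 2 = 0
      · obtain ⟨e1, e2⟩ := key b h1 h2
        exact ⟨b + k * a, e1, by rw [e1, e2, if_pos ha]⟩
      · obtain ⟨e1, e2⟩ := key (k - 1 - b) (by omega) (by omega)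
        exact ⟨k - 1 - b + k * a, e1, by rw [e1, e2, if_neg ha]; omega⟩
  · intro i
    have h1 := Int.emod_nonneg i hk.ne'
    have h2 := Int.emod_lt_of_pos i hk
    have h3 := Int.mul_ediv_add_emod i k
    generalize hq : i / k = q at *
    generalize hr : i % k = r at *
    by_cases hlast : r + 1 < k
    · have e1 : (i + 1) / k = q := by
        rw [← h3, add_assoc, add_comm, Int.add_mul_ediv_left _ _ hk.ne',
          Int.ediv_eq_zero_of_lt (by omega) hlast, zero_add]
      have e2 : (i + 1) % k = r + 1 := by
        rw [← h3, add_assoc, add_comm, Int.add_mul_emod_self_left,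
          Int.emod_eq_of_lt (by omega) hlast]
      simp only [GridAdj, e1, e2, hq, hr, true_and]
      split_ifs <;> omega
    · have e0 : i + 1 = k * (q + 1) := by rw [mul_add]; omega
      have e1 : (i + 1) / k = q + 1 := by rw [e0, Int.mul_ediv_cancel_left _ hk.ne']
      have e2 : (i + 1) % k = 0 := by rw [e0, Int.mul_emod_right]
      simp only [GridAdj, e1, e2, hq, hr, true_or, and_true]
      split_ifs <;> omega

/-! ### The half-plane -/

/-- The number of points of the half-plane `y ≥ 0` with `max |x| y < k`: the level `j` has
`4 * j + 1` points. -/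
def levelStart (k : ℤ) : ℤ := k * (2 * k - 1)

lemma levelStart_succ (k : ℤ) : levelStart (k + 1) = levelStart k + (4 * k + 1) := by
  unfold levelStart; ring

lemma levelStart_lt {k l : ℤ} (hk : 0 ≤ k) (h : k < l) :
    levelStart k + (4 * k + 1) ≤ levelStart l := by
  unfold levelStart; nlinarith

/-- The position of `(x, y)` within its level `k`, when the level is traversed from `(-k, 0)` up to
`(-k, k)`, right to `(k, k)`, and down to `(k, 0)`. -/
def levelPos (k x y : ℤ) : ℤ := if x = -k then y else if y = k then 2 * k + x else 4 * k - y

/-- The index of `(x, y)` on the one-way hamiltonian path of the half-plane `y ≥ 0`. Even levels are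
traversed from left to right, odd ones from right to left. The absolute value `|x|` is spelled
`max x (-x)`, a form that `omega` understands. -/
def halfIdx (p : ℤ × ℤ) : ℤ :=
  levelStart (max (max p.1 (-p.1)) p.2) +
    levelPos (max (max p.1 (-p.1)) p.2) (if max (max p.1 (-p.1)) p.2 % 2 = 0 then p.1 else -p.1) p.2

lemma halfIdx_of_level {x y k : ℤ} (h : max (max x (-x)) y = k) :
    halfIdx (x, y) = levelStart k + levelPos k (if k % 2 = 0 then x else -x) y := by
  subst h; rfl

lemma levelPos_bounds {x y k : ℤ} (h : max (max x (-x)) y = k) (hy : 0 ≤ y) :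
    0 ≤ levelPos k (if k % 2 = 0 then x else -x) y ∧
      levelPos k (if k % 2 = 0 then x else -x) y ≤ 4 * k := by
  unfold levelPos
  split_ifs <;> omega

lemma halfIdx_nonneg {p : ℤ × ℤ} (hp : 0 ≤ p.2) : 0 ≤ halfIdx p := by
  obtain ⟨x, y⟩ := p
  have h1 := levelPos_bounds (x := x) (y := y) rfl hp
  have h2 : 0 ≤ levelStart (max (max x (-x)) y) := by
    have h0 : 0 ≤ max (max x (-x)) y := le_max_of_le_right hp
    rcases h0.eq_or_lt with h | h
    · rw [← h]; simp [levelStart]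
    · have := levelStart_lt le_rfl h
      simp only [levelStart] at this ⊢
      omega
  rw [halfIdx_of_level rfl]
  omega

lemma halfIdx_injOn {p q : ℤ × ℤ} (hp : 0 ≤ p.2) (hq : 0 ≤ q.2) (h : halfIdx p = halfIdx q) :
    p = q := by
  obtain ⟨x, y⟩ := p
  obtain ⟨x', y'⟩ := q
  simp only at hp hq
  obtain ⟨k, hk⟩ : ∃ k, max (max x (-x)) y = k := ⟨_, rfl⟩
  obtain ⟨l, hl⟩ : ∃ l, max (max x' (-x')) y' = l := ⟨_, rfl⟩
  have b1 := levelPos_bounds hk hp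
  have b2 := levelPos_bounds hl hq
  rw [halfIdx_of_level hk, halfIdx_of_level hl] at h
  have hkl : k = l := by
    rcases lt_trichotomy k l with h' | h' | h'
    · have := levelStart_lt (by omega) h'
      omega
    · exact h'
    · have := levelStart_lt (by omega) h'
      omega
  subst hkl
  clear b1 b2
  unfold levelPos at h
  rw [Prod.mk.injEq]
  split_ifs at h <;> omega

lemma exists_halfIdx_succ {p : ℤ × ℤ} (hp : 0 ≤ p.2) :
    ∃ q : ℤ × ℤ, 0 ≤ q.2 ∧ GridAdj p q ∧ halfIdx q = halfIdx p + 1 := by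
  obtain ⟨x, y⟩ := p
  simp only at hp
  obtain ⟨k, hk⟩ : ∃ k, max (max x (-x)) y = k := ⟨_, rfl⟩
  obtain ⟨e, he⟩ : ∃ e : ℤ, e = if k % 2 = 0 then 1 else -1 := ⟨_, rfl⟩
  have hs := levelStart_succ k
  have hadj : GridAdj (x, y) (x + e, y) := by
    rw [he]
    split_ifs <;> simp [GridAdj, sub_eq_add_neg]
  rw [halfIdx_of_level hk]
  by_cases c1 : e * x = -k ∧ y < k
  · refine ⟨(x, y + 1), by simp only; omega, by simp [GridAdj], ?_⟩
    rw [halfIdx_of_level (k := k) (by omega)]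
    unfold levelPos
    split_ifs at he ⊢ <;> subst he <;> omega
  by_cases c2 : y = k ∧ e * x < k
  · refine ⟨(x + e, y), hp, hadj, ?_⟩
    have hk' : max (max (x + e) (-(x + e))) y = k := by split_ifs at he <;> subst he <;> omega
    rw [halfIdx_of_level hk']
    unfold levelPos
    split_ifs at he ⊢ <;> subst he <;> omega
  by_cases c3 : 0 < y
  · refine ⟨(x, y - 1), by simp only; omega, by simp [GridAdj], ?_⟩
    have hk' : max (max x (-x)) (y - 1) = k := by split_ifs at he <;> subst he <;> omega
    rw [halfIdx_of_level hk']
    unfold levelPos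
    split_ifs at he ⊢ <;> subst he <;> omega
  -- The end `(e * k, 0)` of level `k` is followed by the start of level `k + 1` next to it.
  · refine ⟨(x + e, y), hp, hadj, ?_⟩
    have hk' : max (max (x + e) (-(x + e))) y = k + 1 := by split_ifs at he <;> subst he <;> omega
    rw [halfIdx_of_level hk', hs]
    unfold levelPos
    split_ifs at he ⊢ <;> subst he <;> omega

lemma exists_halfPlane_ray : ∃ w : ℕ → ℤ × ℤ, w 0 = (0, 0) ∧ Function.Injective w ∧
    (∀ p, p ∈ Set.range w ↔ 0 ≤ p.2) ∧ ∀ n, GridAdj (w n) (w (n + 1)) := by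
  have hex : ∀ n : ℕ, ∃ p : ℤ × ℤ, 0 ≤ p.2 ∧ halfIdx p = n := by
    intro n
    induction n with
    | zero => exact ⟨(0, 0), le_rfl, by simp [halfIdx, levelStart, levelPos]⟩
    | succ n ih =>
      obtain ⟨p, hp, hpn⟩ := ih
      obtain ⟨q, hq, -, hqn⟩ := exists_halfIdx_succ hp
      exact ⟨q, hq, by rw [hqn, hpn]; push_cast; ring⟩
  choose w hw0 hw using hex
  refine ⟨w, ?_, ?_, ?_, ?_⟩
  · exact halfIdx_injOn (hw0 0) le_rfl (by rw [hw]; simp [halfIdx, levelStart, levelPos])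
  · intro m n h
    have := hw m
    rw [h, hw n] at this
    exact_mod_cast this.symm
  · intro p
    constructor
    · rintro ⟨n, rfl⟩
      exact hw0 n
    · intro hp
      refine ⟨(halfIdx p).toNat, halfIdx_injOn (hw0 _) hp ?_⟩
      rw [hw, Int.toNat_of_nonneg (halfIdx_nonneg hp)]
  · intro n
    obtain ⟨q, hq, hadj, hqn⟩ := exists_halfIdx_succ (hw0 n)
    have : w (n + 1) = q := halfIdx_injOn (hw0 _) hq (by rw [hqn, hw, hw]; push_cast; ring)
    rwa [this]

/-! ### The plane -/

lemma exists_gridPath_plane : ∃ u : ℤ → ℤ × ℤ, Function.Injective u ∧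
    (∀ p, p ∈ Set.range u) ∧ ∀ i, GridAdj (u i) (u (i + 1)) := by
  obtain ⟨w, hw0, hwi, hwr, hwa⟩ := exists_halfPlane_ray
  have hpos : ∀ n, 0 ≤ (w n).2 := fun n => (hwr _).1 ⟨n, rfl⟩
  refine ⟨fun i => match i with
    | Int.ofNat n => w n
    | Int.negSucc n => ((w n).1, -1 - (w n).2), ?_, ?_, ?_⟩
  · rintro (m | m) (n | n) h
    · exact congrArg Int.ofNat (hwi h)
    · have h2 := congrArg Prod.snd h
      have := hpos m
      have := hpos n
      simp only at h2
      omega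
    · have h2 := congrArg Prod.snd h
      have := hpos m
      have := hpos n
      simp only at h2
      omega
    · simp only [Prod.mk.injEq] at h
      exact congrArg Int.negSucc (hwi (Prod.ext h.1 (by omega)))
  · rintro ⟨x, y⟩
    rcases le_or_gt 0 y with hy | hy
    · obtain ⟨n, hn⟩ := (hwr (x, y)).2 hy
      exact ⟨Int.ofNat n, hn⟩
    · obtain ⟨n, hn⟩ := (hwr (x, -1 - y)).2 (by simp only; omega)
      exact ⟨Int.negSucc n, by simp [hn]⟩
  · rintro (n | n | n)
    · exact hwa n
    · change GridAdj ((w 0).1, -1 - (w 0).2) (w 0)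
      simp [GridAdj, hw0]
    · change GridAdj ((w (n + 1)).1, -1 - (w (n + 1)).2) ((w n).1, -1 - (w n).2)
      have := hwa n
      unfold GridAdj at *
      simp only
      omega

/-! ### Adjoining generators -/

variable {G : Type*} [CommGroup G]

/-- The subgroup `H` is traced out by a two-way infinite path without repetitions, all of whose
steps lie in `S`. -/
def IsTraced (S : Set G) (H : Subgroup G) : Prop :=
  ∃ v : ℤ → G, Function.Injective v ∧ (∀ g, g ∈ Set.range v ↔ g ∈ H) ∧
    ∀ i, (v i)⁻¹ * v (i + 1) ∈ S

/-- A two-way hamiltonian path of the grid `ℤ × J` gives one of `H ⊔ ⟨s⟩`, provided that the powers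
`s ^ j` with `j ∈ J` represent each coset of `H` in `H ⊔ ⟨s⟩` exactly once. -/
lemma IsTraced.of_grid {S : Set G} (hS : S⁻¹ = S) {H : Subgroup G} (hH : IsTraced S H) {s : G}
    (hs : s ∈ S) (J : Set ℤ)
    (hinj : ∀ a ∈ J, ∀ b ∈ J, s ^ (a - b) ∈ H → a = b)
    (hsurj : ∀ a : ℤ, ∃ b ∈ J, s ^ (a - b) ∈ H)
    (hu : ∃ u : ℤ → ℤ × ℤ, Function.Injective u ∧ (∀ p, p ∈ Set.range u ↔ p.2 ∈ J) ∧
      ∀ i, GridAdj (u i) (u (i + 1))) :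
    IsTraced S (H ⊔ Subgroup.zpowers s) := by
  obtain ⟨v, hvi, hvr, hva⟩ := hH
  obtain ⟨u, hui, hur, hua⟩ := hu
  have hinv : ∀ g, g ∈ S → g⁻¹ ∈ S := fun g hg => by
    rw [← hS]; simpa using hg
  have hvH : ∀ a, v a ∈ H := fun a => (hvr _).1 ⟨a, rfl⟩
  have huJ : ∀ i, (u i).2 ∈ J := fun i => (hur _).1 ⟨i, rfl⟩
  refine ⟨fun i => v (u i).1 * s ^ (u i).2, ?_, ?_, ?_⟩
  · intro i j h
    simp only at h
    have h2 : (u i).2 = (u j).2 := by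
      apply hinj _ (huJ i) _ (huJ j)
      have : s ^ ((u i).2 - (u j).2) = (v (u i).1)⁻¹ * v (u j).1 := by
        rw [zpow_sub, mul_inv_eq_iff_eq_mul, mul_assoc, ← h, inv_mul_cancel_left]
      rw [this]
      exact H.mul_mem (H.inv_mem (hvH _)) (hvH _)
    rw [h2, mul_left_inj] at h
    exact hui (Prod.ext (hvi h) h2)
  · intro g
    constructor
    · rintro ⟨i, rfl⟩
      exact Subgroup.mul_mem_sup (hvH _) (Subgroup.zpow_mem_zpowers _ _)
    · intro hg
      obtain ⟨h, hh, z, ⟨a, rfl⟩, rfl⟩ := Subgroup.mem_sup.1 hg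
      obtain ⟨b, hb, hab⟩ := hsurj a
      obtain ⟨c, hc⟩ := (hvr _).2 (H.mul_mem hh hab)
      obtain ⟨i, hi⟩ := (hur (c, b)).2 hb
      refine ⟨i, ?_⟩
      simp only [hi, hc]
      rw [mul_assoc, ← zpow_add, sub_add_cancel]
  · intro i
    have key : ∀ a b : ℤ, (v a * s ^ b)⁻¹ * (v (a + 1) * s ^ b) = (v a)⁻¹ * v (a + 1) := by
      intro a b
      rw [mul_inv, mul_mul_mul_comm, inv_mul_cancel, mul_one]
    rcases hua i with ⟨h2, h1 | h1⟩ | ⟨h1, h2 | h2⟩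
    · simp only [h1, h2, key]
      exact hva _
    · have e := key ((u i).1 - 1) (u i).2
      rw [sub_add_cancel] at e
      have := hinv _ (hva ((u i).1 - 1))
      rw [sub_add_cancel, ← e] at this
      simp only [h1, h2]
      simpa using this
    · simp only [h1, h2, zpow_add_one]
      rw [← mul_assoc (v _), inv_mul_cancel_left]
      exact hs
    · simp only [h1, h2, zpow_sub_one]
      rw [← mul_assoc (v _), inv_mul_cancel_left]
      exact hinv _ hs

lemma IsTraced.sup_zpowers {S : Set G} (hS : S⁻¹ = S) {H : Subgroup G} (hH : IsTraced S H) {s : G}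
    (hs : s ∈ S) : IsTraced S (H ⊔ Subgroup.zpowers s) := by
  classical
  by_cases hex : ∃ n : ℕ, 0 < n ∧ s ^ n ∈ H
  · obtain ⟨hk, hkH⟩ := Nat.find_spec hex
    have hmin : ∀ m : ℕ, 0 < m → s ^ m ∈ H → Nat.find hex ≤ m :=
      fun m h0 hm => Nat.find_min' hex ⟨h0, hm⟩
    generalize Nat.find hex = k at hk hkH hmin
    have hmin' : ∀ c : ℤ, s ^ c ∈ H → c.natAbs < k → c = 0 := by
      intro c hc hlt
      by_contra h0
      have : s ^ c.natAbs ∈ H := by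
        rcases Int.natAbs_eq c with h | h
        · rw [h, zpow_natCast] at hc
          exact hc
        · rw [h, zpow_neg, zpow_natCast, H.inv_mem_iff] at hc
          exact hc
      have := hmin _ (by omega) this
      omega
    refine hH.of_grid hS hs (Set.Ico 0 (k : ℤ)) ?_ ?_ ?_
    · rintro a ⟨ha0, hak⟩ b ⟨hb0, hbk⟩ hab
      have := hmin' _ hab (by omega)
      omega
    · intro a
      have hk' : (0 : ℤ) < k := by exact_mod_cast hk
      refine ⟨a % k, ⟨Int.emod_nonneg _ hk'.ne', Int.emod_lt_of_pos _ hk'⟩, ?_⟩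
      have : a - a % k = k * (a / k) := by
        have := Int.mul_ediv_add_emod a k
        omega
      rw [this, zpow_mul, zpow_natCast]
      exact H.zpow_mem hkH _
    · exact exists_gridPath_strip k (by exact_mod_cast hk)
  · push Not at hex
    refine hH.of_grid hS hs Set.univ ?_ (fun a => ⟨a, trivial, by simp⟩) ?_
    · intro a _ b _ hab
      by_contra hne
      apply hex (a - b).natAbs (by omega)
      rcases Int.natAbs_eq (a - b) with h | h
      · rw [h, zpow_natCast] at hab
        exact hab
      · rw [h, zpow_neg, zpow_natCast, H.inv_mem_iff] at hab
        exact hab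
    · obtain ⟨u, h1, h2, h3⟩ := exists_gridPath_plane
      exact ⟨u, h1, fun p => ⟨fun _ => trivial, fun _ => h2 p⟩, h3⟩

lemma isTraced_zpowers {S : Set G} {s : G} (hs : s ∈ S) (ho : ¬ IsOfFinOrder s) :
    IsTraced S (Subgroup.zpowers s) := by
  refine ⟨fun i => s ^ i, injective_zpow_iff_not_isOfFinOrder.2 ho, fun g => Iff.rfl, ?_⟩
  intro i
  simpa [zpow_add_one] using hs

lemma exists_not_isOfFinOrder [Infinite G] {S : Set G} (hSfin : S.Finite)
    (hgen : Subgroup.closure S = ⊤) : ∃ s ∈ S, ¬ IsOfFinOrder s := by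
  by_contra! hcon
  have hle : Subgroup.closure S ≤ CommGroup.torsion G :=
    (Subgroup.closure_le _).2 fun s hs => hcon s hs
  have htor : IsMulTorsion G := fun g => hle (hgen ▸ Subgroup.mem_top g)
  have : Group.FG G := Group.fg_iff.2 ⟨S, hgen, hSfin⟩
  have := CommGroup.finite_of_fg_isMulTorsion G htor
  exact not_finite G

end CayleyHam

open CayleyHam in
/-- every Cayley graph of an infinite finitely generated abelian group
has a two-way hamiltonian path. -/
theorem cayley_two_way_hamiltonian_of_infinite_abelian
    {G : Type*} [CommGroup G] [Infinite G] (S : Set G) (hSfin : S.Finite)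
    (h1 : (1 : G) ∉ S) (hS : S⁻¹ = S) (hgen : Subgroup.closure S = ⊤) :
    ∃ v : ℤ → G, Function.Bijective v ∧
      ∀ i : ℤ, (v i)⁻¹ * v (i + 1) ∈ S := by
  obtain ⟨s₀, hs₀, ho⟩ := exists_not_isOfFinOrder hSfin hgen
  have key : IsTraced S (Subgroup.zpowers s₀ ⊔ Subgroup.closure S) := by
    refine Set.Finite.induction_on_subset
      (motive := fun T _ => IsTraced S (Subgroup.zpowers s₀ ⊔ Subgroup.closure T)) S hSfin ?_ ?_
    · simpa using isTraced_zpowers hs₀ ho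
    · intro a T ha _ _ ih
      rw [Set.insert_eq, Subgroup.closure_union, ← Subgroup.zpowers_eq_closure,
        sup_comm (Subgroup.zpowers a), ← sup_assoc]
      exact ih.sup_zpowers hS ha
  rw [hgen, sup_top_eq] at key
  obtain ⟨v, hvi, hvr, hva⟩ := key
  exact ⟨v, ⟨hvi, fun g => (hvr g).2 trivial⟩, hva⟩
end

section
/- Let X be a simple graph with countably infinite vertex set and let G be a group acting faithfully and transitively on X by automorphisms, whose commutator subgroup G' is cyclic of finite order n. Suppose v : ℤ → V(X) satisfies: v(i) is adjacent to v(i+1) for all i ∈ ℤ, and the map i ↦ G'·v(i) is a two-way hamiltonian path of the quotient graph X/G' (it is injective, its image is the set of all G'-orbits, and consecutive orbits G'·v(i), G'·v(i+1) are distinct). Then the map G' × ℤ → V(X) given by (g,i) ↦ g·v(i) is a bijection; in particular, the n translated paths i ↦ g·v(i) for g ∈ G' are pairwise vertex-disjoint two-way paths in X whose vertex sets partition V(X). -/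
/-!
Everything rests on the fact that `G'` acts freely. An element `g ∈ G'` with a fixed point `x`
fixes every point: conjugation by `h⁻¹` restricts to an endomorphism of the cyclic group `G'`,
hence is a power map there, so `g h = h g ^ m` for some integer `m` and `g • (h • x) = h • x`.
Transitivity makes every vertex of the form `h • x`, and faithfulness gives `g = 1`.
Injectivity of `(g, i) ↦ g • v i` follows, since distinct indices lie in distinct `G'`-orbits.
-/

/-- A cyclic commutator subgroup of a faithful transitive group has trivial point stabilizers. -/
lemma eq_one_of_mem_commutator_of_fixed {V G : Type*} [Group G] [MulAction G V]
    (hfaithful : ∀ g : G, (∀ x : V, g • x = x) → g = 1)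
    (htrans : ∀ u w : V, ∃ g : G, g • u = w)
    (hcyc : IsCyclic (commutator G)) (g : commutator G) (x : V) (hx : (g : G) • x = x) :
    g = 1 := by
  apply Subtype.ext
  refine hfaithful _ fun w => ?_
  obtain ⟨h, rfl⟩ := htrans x w
  obtain ⟨m, hm⟩ := MonoidHom.map_cyclic
    (MulAut.conjNormal (H := commutator G) h⁻¹).toMonoidHom
  have h1 : h⁻¹ * (g : G) * h = (g : G) ^ m := by
    simpa using congrArg (Subtype.val) (hm g)
  have h2 : (g : G) * h = h * (g : G) ^ m := by
    rw [← h1]; group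
  have h3 : (g : G) ^ m ∈ MulAction.stabilizer G x :=
    Subgroup.zpow_mem _ (MulAction.mem_stabilizer_iff.2 hx) m
  rw [← mul_smul, h2, mul_smul, MulAction.mem_stabilizer_iff.1 h3]

/-- Let `X` be a simple graph on a countably infinite vertex set and
`G` a group acting faithfully and transitively on `X` by graph automorphisms whose
commutator subgroup `G'` is cyclic of finite order `n`. If `v : ℤ → V` traces a
path in `X` that projects to a two-way hamiltonian path of the quotient `X/G'`
(the orbit map `i ↦ G'·v(i)` is injective and hits every `G'`-orbit), then
`(g, i) ↦ g • v(i)` is a bijection `G' × ℤ → V`; in particular the `n` translates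
of the path are pairwise disjoint two-way paths partitioning `V`. -/
theorem lifts_of_quotient_hamiltonian_path_partition
    {V : Type*} [Countable V] [Infinite V] (X : SimpleGraph V)
    (G : Type*) [Group G] [MulAction G V]
    (hauto : ∀ (g : G) (u w : V), X.Adj u w → X.Adj (g • u) (g • w))
    (hfaithful : ∀ g : G, (∀ x : V, g • x = x) → g = 1)
    (htrans : ∀ u w : V, ∃ g : G, g • u = w)
    (n : ℕ) (hn : 0 < n) (hcyc : IsCyclic (commutator G))
    (hcard : Nat.card (commutator G) = n)
    (v : ℤ → V)
    (hadj : ∀ i : ℤ, X.Adj (v i) (v (i + 1)))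
    (hinj : ∀ i j : ℤ,
      MulAction.orbit (commutator G) (v i) = MulAction.orbit (commutator G) (v j) → i = j)
    (hsurj : ∀ w : V, ∃ i : ℤ, w ∈ MulAction.orbit (commutator G) (v i))
    (hconsec : ∀ i : ℤ,
      MulAction.orbit (commutator G) (v i) ≠ MulAction.orbit (commutator G) (v (i + 1))) :
    Function.Bijective (fun q : commutator G × ℤ => (q.1 : G) • v q.2) ∧
      ∀ (g : commutator G) (i : ℤ), X.Adj ((g : G) • v i) ((g : G) • v (i + 1)) := by
  refine ⟨⟨?_, ?_⟩, fun g i => hauto _ _ _ (hadj i)⟩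
  · rintro ⟨g, i⟩ ⟨k, j⟩ h
    have h' : g • v i = k • v j := h
    have hij : i = j := by
      apply hinj
      rw [← MulAction.orbit_smul g (v i), h', MulAction.orbit_smul]
    subst hij
    have hfix : k⁻¹ * g = 1 := by
      apply eq_one_of_mem_commutator_of_fixed hfaithful htrans hcyc _ (v i)
      change (k⁻¹ * g) • v i = v i
      rw [mul_smul, h', inv_smul_smul]
    rw [inv_mul_eq_one.1 hfix]
  · intro w
    obtain ⟨i, g, hg⟩ := hsurj w
    exact ⟨(g, i), hg⟩
end

section
/- Let G be an abelian group generated by a finite subset S with 1 ∉ S and S = S⁻¹, and let x ∈ S. Then at least one of the following holds: (a) G = ⟨x⟩, and Cay(G;S) has a hamiltonian path all of whose edges correspond to the generator x (a bijection v from {0,…,|G|−1} onto G if G is finite, or from ℤ onto G if G is infinite, with v(i)⁻¹·v(i+1) ∈ {x, x⁻¹} for all consecutive indices i, i+1); or (b) Cay(G;S) contains a consistently labelled spanning grid with an x-component, meaning: there are index sets I and J, each equal either to ℤ or to {0,1,…,m} for some m ≥ 1, a bijection φ : I × J → G, and for each pair of consecutive indices j, j+1 ∈ J an element s_j ∈ S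 with s_j ∉ {x, x⁻¹}, such that φ(i+1, j) = φ(i, j)·x for all consecutive i, i+1 ∈ I and all j ∈ J, and φ(i, j+1) = φ(i, j)·s_j for all i ∈ I and all consecutive j, j+1 ∈ J. -/
/-!
If `⟨x⟩ = G`, the powers of `x` are the required hamiltonian path. Otherwise a hamiltonian path of
the Cayley graph of `G ⧸ ⟨x⟩` with respect to the image of `S \ {x, x⁻¹}` lifts, edge by edge, to a
sequence `v j` of coset representatives with `v (j + 1) = v j * s j`, and `(i, j) ↦ x ^ i * v j` is
the required grid (`exists_grid_of_quotient_path`).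

It remains to know that every Cayley graph of a finitely generated abelian group has a hamiltonian
path, indexed by `ℤ` if the group is infinite. This theorem of Nash-Williams is
`exists_cayley_path`, proved by induction on the number of generators: the quotient by one generator
has such a path, which again lifts to a spanning grid, and every grid has a hamiltonian path
(`exists_grid_path`). If one side of the grid is finite, a boustrophedon path works. The grid
`ℤ × ℤ` is divided into two half-planes, each of which has a one-way infinite hamiltonian path that
starts on the boundary and runs through the nested U-shaped layers `max |a| b = k` in alternating
directions; the two paths are joined at their starting points.
-/

/-! ### Hamiltonian paths of grids -/

/-- Index sets of hamiltonian paths: all of `ℤ`, or a nonempty initial interval `{0, …, m}`. -/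
def IsIndexInterval (I : Set ℤ) : Prop :=
  I = Set.univ ∨ ∃ m : ℕ, I = Set.Icc 0 (m : ℤ)

/-- Adjacency in the square grid `ℤ × ℤ`. -/
def GridAdj (p q : ℤ × ℤ) : Prop :=
  (q.2 = p.2 ∧ (q.1 = p.1 + 1 ∨ p.1 = q.1 + 1)) ∨
    (q.1 = p.1 ∧ (q.2 = p.2 + 1 ∨ p.2 = q.2 + 1))

/-- The layer of `(a, b)` in the upper half-plane: the `k`-th layer is the U-shaped set
of points with `max |a| b = k`. -/
def layer (p : ℤ × ℤ) : ℤ := max |p.1| p.2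

/-- The first coordinate, with its sign changed on odd layers; in this coordinate every layer is
traversed from `-k` to `k`. -/
def orientedFst (p : ℤ × ℤ) : ℤ := if layer p % 2 = 0 then p.1 else -p.1

/-- The successor map of the one-way hamiltonian path of the upper half-plane that runs through the
layers `0, 1, 2, …`, alternately from left to right and from right to left. -/
def halfPlaneNext (p : ℤ × ℤ) : ℤ × ℤ :=
  if orientedFst p = layer p then
    if p.2 = 0 then (if layer p % 2 = 0 then (p.1 + 1, 0) else (p.1 - 1, 0))
    else (p.1, p.2 - 1)
  else if p.2 = layer p then (if layer p % 2 = 0 then (p.1 + 1, p.2) else (p.1 - 1, p.2))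
  else (p.1, p.2 + 1)

/-- The position of a point on the half-plane path. The layers before the `k`-th one contain
`∑ i < k, (4 * i + 1) = 2 * k ^ 2 - k` points. -/
def halfPlaneRank (p : ℤ × ℤ) : ℤ :=
  2 * (layer p * layer p) +
    if orientedFst p = layer p then 3 * layer p - p.2
    else if p.2 = layer p then layer p + orientedFst p
    else p.2 - layer p

lemma layer_cases (p : ℤ × ℤ) (hp : 0 ≤ p.2) :
    p.1 ≤ layer p ∧ -p.1 ≤ layer p ∧ p.2 ≤ layer p ∧
      (p.1 = layer p ∨ -p.1 = layer p ∨ p.2 = layer p) := by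
  unfold layer
  rcases abs_cases p.1 with h | h <;> rcases max_cases |p.1| p.2 with h' | h' <;> omega

lemma layer_eq {p : ℤ × ℤ} {k : ℤ} (hp : 0 ≤ p.2) (h1 : p.1 ≤ k) (h2 : -p.1 ≤ k) (h3 : p.2 ≤ k)
    (h4 : p.1 = k ∨ -p.1 = k ∨ p.2 = k) : layer p = k := by
  have := layer_cases p hp
  omega

lemma halfPlaneNext_snd_nonneg (p : ℤ × ℤ) (hp : 0 ≤ p.2) : 0 ≤ (halfPlaneNext p).2 := by
  unfold halfPlaneNext
  split_ifs <;> dsimp only <;> omega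

lemma gridAdj_halfPlaneNext (p : ℤ × ℤ) : GridAdj p (halfPlaneNext p) := by
  unfold halfPlaneNext GridAdj
  split_ifs <;> dsimp only <;> omega

lemma halfPlaneRank_next (p : ℤ × ℤ) (hp : 0 ≤ p.2) :
    halfPlaneRank (halfPlaneNext p) = halfPlaneRank p + 1 := by
  obtain ⟨a, b⟩ := p
  obtain ⟨k, hk⟩ : ∃ k, layer (a, b) = k := ⟨_, rfl⟩
  have hc := layer_cases (a, b) hp
  rw [hk] at hc
  dsimp only at hc hp
  have hsq : (k + 1) * (k + 1) = k * k + 2 * k + 1 := by ring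
  have key : ∀ a' b' k' : ℤ, layer (a', b') = k' → halfPlaneRank (a', b') = 2 * (k' * k') +
      if (if k' % 2 = 0 then a' else -a') = k' then 3 * k' - b'
      else if b' = k' then k' + (if k' % 2 = 0 then a' else -a') else b' - k' := by
    rintro a' b' k' rfl
    simp only [halfPlaneRank, orientedFst]
  have hn : halfPlaneNext (a, b) = if (if k % 2 = 0 then a else -a) = k then
      if b = 0 then (if k % 2 = 0 then (a + 1, 0) else (a - 1, 0)) else (a, b - 1)
      else if b = k then (if k % 2 = 0 then (a + 1, b) else (a - 1, b)) else (a, b + 1) := by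
    simp only [halfPlaneNext, orientedFst, hk]
  rw [hn, key a b k hk]
  have same : ∀ a' b' : ℤ, 0 ≤ b' → a' ≤ k → -a' ≤ k → b' ≤ k → (a' = k ∨ -a' = k ∨ b' = k) →
      halfPlaneRank (a', b') = _ :=
    fun a' b' h0 h1 h2 h3 h4 => key a' b' k (layer_eq h0 h1 h2 h3 h4)
  have up : ∀ a' : ℤ, (a' = k + 1 ∨ -a' = k + 1) → halfPlaneRank (a', 0) = _ :=
    fun a' h => key a' 0 (k + 1) (layer_eq le_rfl (by dsimp only; omega) (by dsimp only; omega)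
      (by dsimp only; omega) (by dsimp only; omega))
  rw [hsq] at up
  by_cases hpar : k % 2 = 0
  · have hpar' : ¬ (k + 1) % 2 = 0 := by omega
    simp only [hpar, hpar', if_true, if_false] at *
    split_ifs <;> first
      | (rw [up _ (by omega)]; split_ifs <;> omega)
      | (rw [same _ _ (by omega) (by omega) (by omega) (by omega) (by omega)]
         split_ifs <;> omega)
  · have hpar' : (k + 1) % 2 = 0 := by omega
    simp only [hpar, hpar', if_true, if_false] at *
    split_ifs <;> first
      | (rw [up _ (by omega)]; split_ifs <;> omega)
      | (rw [same _ _ (by omega) (by omega) (by omega) (by omega) (by omega)]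
         split_ifs <;> omega)

lemma halfPlaneRank_nonneg (p : ℤ × ℤ) (hp : 0 ≤ p.2) : 0 ≤ halfPlaneRank p := by
  have hc := layer_cases p hp
  have : layer p ≤ layer p * layer p := by nlinarith [sq_nonneg (layer p), Int.le_self_sq (layer p)]
  unfold halfPlaneRank orientedFst
  split_ifs <;> omega

/-- Every point of the half-plane other than the origin has a predecessor on the path. -/
lemma exists_halfPlaneNext_eq (p : ℤ × ℤ) (hp : 0 ≤ p.2) (h0 : p ≠ (0, 0)) :
    ∃ q : ℤ × ℤ, 0 ≤ q.2 ∧ halfPlaneNext q = p := by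
  obtain ⟨a, b⟩ := p
  obtain ⟨k, hk⟩ : ∃ k, layer (a, b) = k := ⟨_, rfl⟩
  have hc := layer_cases (a, b) hp
  rw [hk] at hc
  dsimp only at hc hp
  have hk0 : 0 < k := by
    by_contra h
    exact h0 (Prod.ext (by dsimp only; omega) (by dsimp only; omega))
  have next : ∀ a' b' k' : ℤ, 0 ≤ b' → a' ≤ k' → -a' ≤ k' → b' ≤ k' →
      (a' = k' ∨ -a' = k' ∨ b' = k') →
      halfPlaneNext (a', b') = if (if k' % 2 = 0 then a' else -a') = k' then
      if b' = 0 then (if k' % 2 = 0 then (a' + 1, 0) else (a' - 1, 0)) else (a', b' - 1)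
      else if b' = k' then (if k' % 2 = 0 then (a' + 1, b') else (a' - 1, b'))
      else (a', b' + 1) := by
    intro a' b' k' h1 h2 h3 h4 h5
    have hl : layer (a', b') = k' := layer_eq h1 h2 h3 h4 h5
    simp only [halfPlaneNext, orientedFst, hl]
  -- `e` is the direction in which the `k`-th layer is traversed.
  obtain ⟨e, he⟩ : ∃ e : ℤ, e = if k % 2 = 0 then 1 else -1 := ⟨_, rfl⟩
  by_cases hR : a = e * k ∧ b < k
  · refine ⟨(a, b + 1), by dsimp only; omega, ?_⟩
    split_ifs at he <;> subst he <;>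
    · rw [next a (b + 1) k (by omega) (by omega) (by omega) (by omega) (by omega)]
      split_ifs <;> refine Prod.ext ?_ ?_ <;> dsimp only <;> omega
  by_cases hT : b = k ∧ a ≠ -(e * k)
  · refine ⟨(a - e, b), by dsimp only; omega, ?_⟩
    split_ifs at he <;> subst he <;>
    · rw [next _ b k (by omega) (by omega) (by omega) (by omega) (by omega)]
      split_ifs <;> refine Prod.ext ?_ ?_ <;> dsimp only <;> omega
  have ha : a = -(e * k) := by split_ifs at he <;> subst he <;> omega
  by_cases hb : 0 < b
  · refine ⟨(a, b - 1), by dsimp only; omega, ?_⟩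
    split_ifs at he <;> subst he <;>
    · rw [next a (b - 1) k (by omega) (by omega) (by omega) (by omega) (by omega)]
      split_ifs <;> refine Prod.ext ?_ ?_ <;> dsimp only <;> omega
  · refine ⟨(a + e, 0), le_rfl, ?_⟩
    split_ifs at he <;> subst he <;>
    · rw [next _ 0 (k - 1) (by omega) (by omega) (by omega) (by omega) (by omega)]
      split_ifs <;> refine Prod.ext ?_ ?_ <;> dsimp only <;> omega

lemma exists_halfPlane_path : ∃ f : ℕ → ℤ × ℤ, f 0 = (0, 0) ∧ Function.Injective f ∧
    (∀ t, 0 ≤ (f t).2) ∧ (∀ p : ℤ × ℤ, 0 ≤ p.2 → ∃ t, f t = p) ∧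
    ∀ t, GridAdj (f t) (f (t + 1)) := by
  have hs : ∀ t, halfPlaneNext^[t + 1] (0, 0) = halfPlaneNext (halfPlaneNext^[t] (0, 0)) :=
    fun t => Function.iterate_succ_apply' _ _ _
  have hpos : ∀ t, 0 ≤ (halfPlaneNext^[t] (0, 0)).2 := by
    intro t
    induction t with
    | zero => simp
    | succ t ih => rw [hs]; exact halfPlaneNext_snd_nonneg _ ih
  have hrank : ∀ t : ℕ, halfPlaneRank (halfPlaneNext^[t] (0, 0)) = t := by
    intro t
    induction t with
    | zero => simp [halfPlaneRank, layer, orientedFst]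
    | succ t ih => rw [hs, halfPlaneRank_next _ (hpos t), ih]; push_cast; rfl
  refine ⟨fun t => halfPlaneNext^[t] (0, 0), rfl, ?_, hpos, ?_, ?_⟩
  · intro s t hst
    have := congrArg halfPlaneRank hst
    dsimp only at this
    rw [hrank, hrank] at this
    exact_mod_cast this
  · have : ∀ n : ℕ, ∀ p : ℤ × ℤ, 0 ≤ p.2 → halfPlaneRank p < n →
        ∃ t, halfPlaneNext^[t] (0, 0) = p := by
      intro n
      induction n with
      | zero => intro p hp h; have := halfPlaneRank_nonneg p hp; omega
      | succ n ih =>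
        intro p hp h
        by_cases h0 : p = (0, 0)
        · exact ⟨0, h0.symm⟩
        obtain ⟨q, hq, rfl⟩ := exists_halfPlaneNext_eq p hp h0
        rw [halfPlaneRank_next q hq] at h
        obtain ⟨t, rfl⟩ := ih q hq (by push_cast at h; omega)
        exact ⟨t + 1, hs t⟩
    intro p hp
    exact this ((halfPlaneRank p).toNat + 1) p hp (by have := halfPlaneRank_nonneg p hp; omega)
  · intro t
    dsimp only
    rw [hs]
    exact gridAdj_halfPlaneNext _

lemma GridAdj.symm {p q : ℤ × ℤ} (h : GridAdj p q) : GridAdj q p := by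
  unfold GridAdj at *
  omega

/-- Two copies of the half-plane path, one of them reflected, form a two-way infinite hamiltonian
path of the plane. -/
lemma exists_plane_path : ∃ p : ℤ → ℤ × ℤ, Function.Bijective p ∧
    ∀ t, GridAdj (p t) (p (t + 1)) := by
  obtain ⟨f, f0, finj, fpos, fsurj, fadj⟩ := exists_halfPlane_path
  refine ⟨fun t => if 0 ≤ t then f t.toNat
    else ((f (-1 - t).toNat).1, -1 - (f (-1 - t).toNat).2), ⟨?_, ?_⟩, ?_⟩
  · intro s t hst
    dsimp only at hst
    have h1 := fpos s.toNat
    have h2 := fpos t.toNat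
    have h3 := fpos (-1 - s).toNat
    have h4 := fpos (-1 - t).toNat
    split_ifs at hst
    · have := finj hst
      omega
    · rw [hst] at h1; dsimp only at h1; omega
    · rw [← hst] at h2; dsimp only at h2; omega
    · rw [Prod.mk.injEq] at hst
      have := finj (Prod.ext hst.1 (by omega) :
        f (-1 - s).toNat = f (-1 - t).toNat)
      omega
  · intro p
    by_cases hp : 0 ≤ p.2
    · obtain ⟨t, rfl⟩ := fsurj p hp
      exact ⟨t, by simp⟩
    · obtain ⟨t, ht⟩ := fsurj (p.1, -1 - p.2) (by dsimp only; omega)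
      refine ⟨-1 - t, ?_⟩
      have h : ¬ (0 : ℤ) ≤ -1 - t := by omega
      have h' : (-1 - (-1 - (t : ℤ))).toNat = t := by omega
      simp only [h, if_false, h', ht]
      exact Prod.ext rfl (by dsimp only; omega)
  · intro t
    dsimp only
    by_cases h : 0 ≤ t
    · rw [if_pos h, if_pos (by omega), show (t + 1).toNat = t.toNat + 1 by omega]
      exact fadj _
    · rw [if_neg h]
      by_cases h1 : t = -1
      · subst h1
        norm_num [f0, GridAdj]
      · rw [if_neg (by omega), show (-1 - t).toNat = (-1 - (t + 1)).toNat + 1 by omega]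
        have := (fadj (-1 - (t + 1)).toNat).symm
        unfold GridAdj at *
        dsimp only
        omega

/-- The boustrophedon path of `I × {0, …, m}`. -/
lemma exists_snake_path (I : Set ℤ) (hI : IsIndexInterval I) (m : ℕ) :
    ∃ K : Set ℤ, IsIndexInterval K ∧ ∃ p : ℤ → ℤ × ℤ,
      Set.BijOn p K (I ×ˢ Set.Icc 0 (m : ℤ)) ∧ ∀ t, GridAdj (p t) (p (t + 1)) := by
  have hM : (0 : ℤ) < m + 1 := by omega
  refine ⟨{t | t / (m + 1 : ℤ) ∈ I}, ?_, fun t => (t / (m + 1 : ℤ),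
    if t / (m + 1 : ℤ) % 2 = 0 then t % (m + 1 : ℤ) else m - t % (m + 1 : ℤ)),
    ⟨?_, ?_, ?_⟩, ?_⟩
  · rcases hI with rfl | ⟨n, rfl⟩
    · left; simp
    · right
      refine ⟨n * (m + 1) + m, Set.ext fun t => ?_⟩
      simp only [Set.mem_ofPred_eq, Set.mem_Icc]
      rw [Int.le_ediv_iff_mul_le hM, ← Int.lt_add_one_iff (a := t / _), Int.ediv_lt_iff_lt_mul hM]
      push_cast
      constructor <;> rintro ⟨h1, h2⟩ <;> constructor <;> linarith
  · intro t ht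
    have h1 := Int.emod_nonneg t hM.ne'
    have h2 := Int.emod_lt_of_pos t hM
    refine ⟨ht, ?_⟩
    simp only [Set.mem_Icc]
    split_ifs <;> omega
  · intro s _ t _ hst
    simp only [Prod.mk.injEq] at hst
    obtain ⟨h1, h2⟩ := hst
    have hs := Int.emod_add_mul_ediv s (m + 1)
    have ht := Int.emod_add_mul_ediv t (m + 1)
    rw [h1] at h2 hs
    split_ifs at h2 <;> linarith
  · rintro ⟨a, b⟩ ⟨ha, hb⟩
    simp only [Set.mem_Icc] at hb
    have key : ∀ r : ℤ, 0 ≤ r → r ≤ m →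
        (r + (m + 1) * a) / (m + 1 : ℤ) = a ∧ (r + (m + 1) * a) % (m + 1 : ℤ) = r := by
      intro r h0 h1
      rw [Int.add_mul_ediv_left _ _ hM.ne', Int.add_mul_emod_self_left,
        Int.ediv_eq_zero_of_lt h0 (by omega), Int.emod_eq_of_lt h0 (by omega)]
      simp
    by_cases hpar : a % 2 = 0
    · obtain ⟨h1, h2⟩ := key b hb.1 hb.2
      refine ⟨b + (m + 1) * a, ?_, ?_⟩
      · simpa only [Set.mem_ofPred_eq, h1] using ha
      · simp only [h1, h2, hpar, if_true]
    · obtain ⟨h1, h2⟩ := key (m - b) (by omega) (by omega)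
      refine ⟨(m - b) + (m + 1) * a, ?_, ?_⟩
      · simpa only [Set.mem_ofPred_eq, h1] using ha
      · simp only [h1, h2, hpar, if_false, sub_sub_cancel]
  · intro t
    have h1 := Int.emod_nonneg t hM.ne'
    have h2 := Int.emod_lt_of_pos t hM
    have ht := Int.emod_add_mul_ediv t (m + 1)
    have hstep : ((t + 1) / (m + 1 : ℤ) = t / (m + 1 : ℤ) + 1 ∧ (t + 1) % (m + 1 : ℤ) = 0 ∧
        t % (m + 1 : ℤ) = m) ∨ ((t + 1) / (m + 1 : ℤ) = t / (m + 1 : ℤ) ∧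
        (t + 1) % (m + 1 : ℤ) = t % (m + 1 : ℤ) + 1) := by
      by_cases hr : t % (m + 1 : ℤ) = m
      · left
        have : t + 1 = (m + 1) * (t / (m + 1 : ℤ) + 1) := by linarith
        refine ⟨?_, ?_, hr⟩
        · conv_lhs => rw [this, Int.mul_ediv_cancel_left _ hM.ne']
        · rw [this, Int.mul_emod_right]
      · right
        have : t + 1 = (t % (m + 1 : ℤ) + 1) + (m + 1) * (t / (m + 1 : ℤ)) := by linarith
        constructor
        · conv_lhs => rw [this, Int.add_mul_ediv_left _ _ hM.ne',
            Int.ediv_eq_zero_of_lt (by omega) (by omega), zero_add]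
        · conv_lhs => rw [this, Int.add_mul_emod_self_left, Int.emod_eq_of_lt (by omega) (by omega)]
    unfold GridAdj
    dsimp only
    generalize t % (m + 1 : ℤ) = r at *
    generalize t / (m + 1 : ℤ) = a at *
    generalize (t + 1) % (m + 1 : ℤ) = r' at *
    generalize (t + 1) / (m + 1 : ℤ) = a' at *
    clear ht
    split_ifs <;> omega

lemma exists_grid_path (I J : Set ℤ) (hI : IsIndexInterval I) (hJ : IsIndexInterval J) :
    ∃ K : Set ℤ, IsIndexInterval K ∧ ∃ p : ℤ → ℤ × ℤ,
      Set.BijOn p K (I ×ˢ J) ∧ ∀ t, GridAdj (p t) (p (t + 1)) := by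
  obtain rfl | ⟨m, rfl⟩ := hJ
  · obtain rfl | ⟨n, rfl⟩ := hI
    · obtain ⟨p, hp, hadj⟩ := exists_plane_path
      refine ⟨Set.univ, Or.inl rfl, p, ?_, hadj⟩
      rw [Set.univ_prod_univ]
      exact Set.bijOn_univ.mpr hp
    · obtain ⟨K, hK, p, hp, hadj⟩ := exists_snake_path Set.univ (Or.inl rfl) n
      refine ⟨K, hK, fun t => (p t).swap, ⟨?_, ?_, ?_⟩, ?_⟩
      · intro t ht
        exact ⟨(hp.mapsTo ht).2, (hp.mapsTo ht).1⟩
      · intro s hs t ht h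
        exact hp.injOn hs ht (Prod.swap_injective h)
      · rintro ⟨a, b⟩ ⟨ha, hb⟩
        obtain ⟨t, ht, h⟩ := hp.surjOn (show (b, a) ∈ _ from ⟨hb, ha⟩)
        exact ⟨t, ht, by simp [h]⟩
      · intro t
        exact (hadj t).elim Or.inr Or.inl
  · exact exists_snake_path I hI m

/-! ### Hamiltonian paths of abelian Cayley graphs -/

/-- A set of exponents representing every element of `⟨x⟩` exactly once: all of `ℤ` if `x` has
infinite order, and `{0, …, orderOf x - 1}` otherwise. -/
noncomputable def powerRange {G : Type*} [Group G] (x : G) : Set ℤ :=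
  if orderOf x = 0 then Set.univ else Set.Icc 0 ((orderOf x : ℤ) - 1)

lemma isIndexInterval_powerRange {G : Type*} [Group G] (x : G) :
    IsIndexInterval (powerRange x) := by
  unfold powerRange IsIndexInterval
  split_ifs with h
  · exact Or.inl rfl
  · exact Or.inr ⟨orderOf x - 1, by rw [Nat.cast_sub (by omega), Nat.cast_one]⟩

lemma bijOn_zpow_powerRange {G : Type*} [Group G] (x : G) :
    Set.BijOn (fun i : ℤ => x ^ i) (powerRange x) (Subgroup.zpowers x) := by
  refine ⟨fun i _ => ⟨i, rfl⟩, ?_, ?_⟩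
  · intro i hi j hj hij
    have h := orderOf_dvd_sub_iff_zpow_eq_zpow.mpr hij
    unfold powerRange at hi hj
    split_ifs at hi hj with h0
    · rw [h0, Nat.cast_zero, zero_dvd_iff] at h
      omega
    · simp only [Set.mem_Icc] at hi hj
      have := Int.eq_zero_of_abs_lt_dvd h (abs_lt.mpr ⟨by omega, by omega⟩)
      omega
  · rintro _ ⟨i, rfl⟩
    by_cases h0 : orderOf x = 0
    · exact ⟨i, by simp [powerRange, h0], rfl⟩
    · refine ⟨i % orderOf x, ?_, zpow_mod_orderOf x i⟩
      have h1 := Int.emod_nonneg i (b := orderOf x) (by omega)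
      have h2 := Int.emod_lt_of_pos i (b := orderOf x) (by omega)
      simp only [powerRange, h0, if_false, Set.mem_Icc]
      omega

/-- A two-way infinite sequence is determined by its value at `0` and arbitrary increments. -/
lemma exists_seq_of_increments {G : Type*} [Group G] (s : ℤ → G) (g : G) :
    ∃ v : ℤ → G, v 0 = g ∧ ∀ j, v (j + 1) = v j * s j := by
  let pos : ℕ → G := fun n => Nat.rec g (fun k a => a * s k) n
  let neg : ℕ → G := fun n => Nat.rec g (fun k a => a * (s (Int.negSucc k))⁻¹) n
  refine ⟨fun j => match j with
    | Int.ofNat n => pos n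
    | Int.negSucc n => neg (n + 1), rfl, ?_⟩
  rintro (n | n)
  · rfl
  · cases n with
    | zero => exact (inv_mul_cancel_right g (s (Int.negSucc 0))).symm
    | succ n => exact (inv_mul_cancel_right (neg (n + 1)) (s (Int.negSucc (n + 1)))).symm

/-- A hamiltonian path of `G ⧸ ⟨x⟩` lifts to a sequence of coset representatives in `G`, whose
translates by the powers of `x` form a spanning grid of `G`. -/
lemma exists_grid_of_quotient_path {G : Type*} [CommGroup G] (x : G) (T : Set G) (J : Set ℤ)
    (w : ℤ → G ⧸ Subgroup.zpowers x) (hw : Set.BijOn w J Set.univ)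
    (hT : ∀ j, j ∈ J → j + 1 ∈ J → ∃ t ∈ T, (t : G ⧸ Subgroup.zpowers x) = (w j)⁻¹ * w (j + 1)) :
    ∃ v s : ℤ → G,
      Set.BijOn (fun p : ℤ × ℤ => x ^ p.1 * v p.2) (powerRange x ×ˢ J) Set.univ ∧
      (∀ j, j ∈ J → j + 1 ∈ J → s j ∈ T) ∧ ∀ j, v (j + 1) = v j * s j := by
  have hlift : ∀ j, ∃ t : G, (t : G ⧸ Subgroup.zpowers x) = (w j)⁻¹ * w (j + 1) ∧
      (j ∈ J → j + 1 ∈ J → t ∈ T) := by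
    intro j
    by_cases h : j ∈ J ∧ j + 1 ∈ J
    · obtain ⟨t, h1, h2⟩ := hT j h.1 h.2
      exact ⟨t, h2, fun _ _ => h1⟩
    · obtain ⟨t, ht⟩ := QuotientGroup.mk_surjective ((w j)⁻¹ * w (j + 1))
      exact ⟨t, ht, fun h1 h2 => absurd ⟨h1, h2⟩ h⟩
  choose s hs hsT using hlift
  obtain ⟨g, hg⟩ := QuotientGroup.mk_surjective (w 0)
  obtain ⟨v, hv0, hv⟩ := exists_seq_of_increments s g
  have hvw : ∀ j, (v j : G ⧸ Subgroup.zpowers x) = w j := by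
    intro j
    induction j using Int.induction_on with
    | zero => rw [hv0, hg]
    | succ j ih => rw [hv, QuotientGroup.mk_mul, ih, hs, mul_inv_cancel_left]
    | pred j ih =>
      have h1 := hv (-j - 1)
      have h2 := hs (-j - 1)
      rw [sub_add_cancel] at h1 h2
      rw [h1, QuotientGroup.mk_mul, h2, ← mul_assoc, mul_eq_right, mul_inv_eq_one] at ih
      exact ih
  have hx : ∀ i : ℤ, ((x ^ i : G) : G ⧸ Subgroup.zpowers x) = 1 := fun i =>
    (QuotientGroup.eq_one_iff _).mpr ⟨i, rfl⟩
  refine ⟨v, s, ⟨fun _ _ => trivial, ?_, ?_⟩, hsT, hv⟩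
  · rintro ⟨i, j⟩ ⟨hi, hj⟩ ⟨i', j'⟩ ⟨hi', hj'⟩ h
    dsimp only at h hi hj hi' hj'
    have hq := congrArg (fun a : G => (a : G ⧸ Subgroup.zpowers x)) h
    simp only [QuotientGroup.mk_mul, hx, one_mul, hvw] at hq
    obtain rfl := hw.injOn hj hj' hq
    obtain rfl := (bijOn_zpow_powerRange x).injOn hi hi' (mul_right_cancel h)
    rfl
  · intro a _
    obtain ⟨j, hj, hja⟩ := hw.surjOn (Set.mem_univ (a : G ⧸ Subgroup.zpowers x))
    rw [← hvw, QuotientGroup.eq] at hja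
    obtain ⟨i, hi, hia⟩ := (bijOn_zpow_powerRange x).surjOn hja
    refine ⟨(i, j), ⟨hi, hj⟩, ?_⟩
    dsimp only at hia ⊢
    rw [hia, mul_comm, mul_inv_cancel_left]

/-- If `U ∪ T` generates `G` and `U ⊆ ⟨x⟩`, then the image of `T` alone generates `G ⧸ ⟨x⟩`. -/
lemma closure_map_mk_eq_top {G : Type*} [CommGroup G] (x : G) (T U : Set G)
    (hU : U ⊆ Subgroup.zpowers x) (h : Subgroup.closure (U ∪ T) = ⊤) :
    Subgroup.closure ((QuotientGroup.mk' (Subgroup.zpowers x)) '' T) = ⊤ := by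
  have hmap := congrArg (Subgroup.map (QuotientGroup.mk' (Subgroup.zpowers x))) h
  rw [MonoidHom.map_closure, Set.image_union, Subgroup.closure_union,
    Subgroup.map_top_of_surjective _ (QuotientGroup.mk'_surjective _)] at hmap
  rw [← hmap, right_eq_sup, Subgroup.closure_le]
  rintro _ ⟨u, hu, rfl⟩
  rw [QuotientGroup.mk'_apply, (QuotientGroup.eq_one_iff _).mpr (hU hu)]
  exact one_mem _

/-- Nash-Williams: a connected Cayley graph of a finitely generated abelian group has a
hamiltonian path, two-way infinite if the group is infinite. -/
lemma exists_cayley_path (l : ℕ) : ∀ (G : Type*) [CommGroup G] (L : List G), L.length = l →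
    Subgroup.closure {g | g ∈ L} = ⊤ →
    ∃ K : Set ℤ, IsIndexInterval K ∧ ∃ v : ℤ → G, Set.BijOn v K Set.univ ∧
      ∀ t, t ∈ K → t + 1 ∈ K → (v t)⁻¹ * v (t + 1) ∈ L ∨ ((v t)⁻¹ * v (t + 1))⁻¹ ∈ L := by
  induction l with
  | zero =>
    intro G _ L hL hgen
    obtain rfl := List.length_eq_zero_iff.mp hL
    have hsub : ∀ g : G, g = 1 := by
      intro g
      have : g ∈ Subgroup.closure {g : G | g ∈ ([] : List G)} := hgen ▸ Subgroup.mem_top g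
      simpa using this
    refine ⟨Set.Icc 0 0, Or.inr ⟨0, by simp⟩, fun _ => 1, ⟨fun _ _ => trivial, ?_, ?_⟩, ?_⟩
    · intro i hi j hj _
      simp only [Set.mem_Icc] at hi hj
      omega
    · exact fun g _ => ⟨0, by simp, (hsub g).symm⟩
    · intro t h1 h2
      simp only [Set.mem_Icc] at h1 h2
      omega
  | succ l ih =>
    intro G _ L hL hgen
    obtain ⟨x, L, rfl⟩ := List.exists_cons_of_length_eq_add_one hL
    obtain ⟨J, hJ, w, hw, hadj⟩ := ih (G ⧸ Subgroup.zpowers x)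
      (L.map (QuotientGroup.mk' (Subgroup.zpowers x))) (by simpa using hL) (by
        have h := closure_map_mk_eq_top x {g | g ∈ L} {x} (by simp) (by
          rw [← hgen]; congr 1; ext g; simp)
        rw [← h]; congr 1; ext g; simp)
    obtain ⟨v, s, hbij, hsT, hv⟩ := exists_grid_of_quotient_path x {t | t ∈ L ∨ t⁻¹ ∈ L} J w hw (by
      intro j h1 h2
      rcases hadj j h1 h2 with h | h
      · obtain ⟨t, ht, h⟩ := List.mem_map.mp h
        exact ⟨t, Or.inl ht, h⟩
      · obtain ⟨t, ht, h⟩ := List.mem_map.mp h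
        refine ⟨t⁻¹, Or.inr (by simpa using ht), ?_⟩
        rw [QuotientGroup.mk_inv, inv_eq_iff_eq_inv]
        exact h)
    obtain ⟨K, hK, p, hp, hpadj⟩ := exists_grid_path _ J (isIndexInterval_powerRange x) hJ
    refine ⟨K, hK, fun t => x ^ (p t).1 * v (p t).2, hbij.comp hp, ?_⟩
    intro t h1 h2
    have h1' := (hp.mapsTo h1).2
    have h2' := (hp.mapsTo h2).2
    have hadj := hpadj t
    dsimp only
    generalize p t = a at *
    generalize p (t + 1) = b at *
    obtain ⟨i, j⟩ := a
    obtain ⟨i', j'⟩ := b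
    unfold GridAdj at hadj
    dsimp only at *
    rcases hadj with ⟨rfl, rfl | rfl⟩ | ⟨rfl, rfl | rfl⟩
    · left
      rw [zpow_add_one, mul_right_comm, inv_mul_cancel_left]
      exact List.mem_cons_self
    · right
      rw [mul_inv_rev, inv_inv, zpow_add_one, mul_right_comm, inv_mul_cancel_left]
      exact List.mem_cons_self
    · have := hsT j h1' h2'
      rw [hv]
      have e : (x ^ i' * v j)⁻¹ * (x ^ i' * (v j * s j)) = s j := by group
      rw [e]
      exact this.imp (List.mem_cons_of_mem _) (List.mem_cons_of_mem _)
    · have := hsT j' h2' h1'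
      rw [hv]
      have e : (x ^ i' * (v j' * s j'))⁻¹ * (x ^ i' * v j') = (s j')⁻¹ := by group
      rw [e, inv_inv]
      exact this.symm.imp (List.mem_cons_of_mem _) (List.mem_cons_of_mem _)

/-! ### The spanning grid -/

/-- Let `G` be an abelian group generated by a finite symmetric set `S`
with `1 ∉ S`, and let `x ∈ S`. Then either `G = ⟨x⟩` and `Cay(G;S)` has a hamiltonian
path all of whose edges are labelled `x^{±1}` (indexed by `{0,…,|G|-1}` if `G` is
finite and by `ℤ` otherwise), or `Cay(G;S)` contains a consistently labelled
spanning grid with an `x`-component. -/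
theorem abelian_spanning_grid_single
    {G : Type*} [CommGroup G] (S : Set G) (hSfin : S.Finite)
    (h1 : (1 : G) ∉ S) (hS : S⁻¹ = S) (hgen : Subgroup.closure S = ⊤)
    (x : G) (hx : x ∈ S) :
    -- (a) a hamiltonian path all of whose edges correspond to the generator `x`
    (Subgroup.closure ({x} : Set G) = ⊤ ∧
      ∃ (I : Set ℤ) (v : ℤ → G),
        ((Finite G ∧ I = Set.Icc 0 ((Nat.card G : ℤ) - 1)) ∨
          (Infinite G ∧ I = Set.univ)) ∧
        Set.BijOn v I Set.univ ∧
        (∀ i : ℤ, i ∈ I → i + 1 ∈ I → (v i)⁻¹ * v (i + 1) ∈ ({x, x⁻¹} : Set G))) ∨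
    -- (b) a consistently labelled spanning grid with an `x`-component
    (∃ (I J : Set ℤ) (φ : ℤ × ℤ → G) (s : ℤ → G),
      (I = Set.univ ∨ ∃ m : ℕ, 1 ≤ m ∧ I = Set.Icc 0 (m : ℤ)) ∧
      (J = Set.univ ∨ ∃ m : ℕ, 1 ≤ m ∧ J = Set.Icc 0 (m : ℤ)) ∧
      Set.BijOn φ (I ×ˢ J) Set.univ ∧
      (∀ j : ℤ, j ∈ J → j + 1 ∈ J → s j ∈ S ∧ s j ∉ ({x, x⁻¹} : Set G)) ∧
      (∀ i j : ℤ, i ∈ I → i + 1 ∈ I → j ∈ J → φ (i + 1, j) = φ (i, j) * x) ∧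
      (∀ i j : ℤ, i ∈ I → j ∈ J → j + 1 ∈ J → φ (i, j + 1) = φ (i, j) * s j)) := by
  by_cases htop : Subgroup.zpowers x = ⊤
  · left
    refine ⟨by rw [← Subgroup.zpowers_eq_closure, htop], powerRange x, fun i => x ^ i, ?_, ?_, ?_⟩
    · have hcard := orderOf_eq_card_of_zpowers_eq_top htop
      unfold powerRange
      split_ifs with h0
      · right
        rw [hcard, Nat.card_eq_zero] at h0
        exact ⟨h0.resolve_left (not_isEmpty_of_nonempty G), rfl⟩
      · left
        exact ⟨Nat.finite_of_card_ne_zero (hcard ▸ h0), by rw [hcard]⟩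
    · have := bijOn_zpow_powerRange x
      rwa [htop, Subgroup.coe_top] at this
    · intro i _ _
      left
      simp [zpow_add]
  · right
    have hx1 : x ≠ 1 := fun h => h1 (h ▸ hx)
    have hTfin : (S \ {x, x⁻¹}).Finite := hSfin.subset Set.sdiff_subset
    have hinv : ∀ t : G, t⁻¹ ∈ S \ {x, x⁻¹} → t ∈ S \ {x, x⁻¹} := by
      rintro t ⟨ht, ht'⟩
      refine ⟨by rw [← hS]; exact ht, fun h => ht' ?_⟩
      rcases h with rfl | h
      · exact Or.inr rfl
      · left; rw [h, inv_inv]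
    obtain ⟨J, hJ, w, hw, hadj⟩ := exists_cayley_path _ (G ⧸ Subgroup.zpowers x)
      (hTfin.toFinset.toList.map (QuotientGroup.mk' (Subgroup.zpowers x))) rfl (by
        have h := closure_map_mk_eq_top x (S \ {x, x⁻¹}) {x, x⁻¹}
          (by rintro _ (rfl | rfl) <;> simp) (by
            rw [eq_top_iff, ← hgen]
            apply Subgroup.closure_mono
            intro g hg
            by_cases h : g ∈ ({x, x⁻¹} : Set G)
            · exact Or.inl h
            · exact Or.inr ⟨hg, h⟩)
        rw [← h]; congr 1; ext g; simp)
    obtain ⟨v, s, hbij, hsT, hv⟩ := exists_grid_of_quotient_path x (S \ {x, x⁻¹}) J w hw (by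
      intro j h1 h2
      rcases hadj j h1 h2 with h | h
      · obtain ⟨t, ht, h⟩ := List.mem_map.mp h
        exact ⟨t, by simpa using ht, h⟩
      · obtain ⟨t, ht, h⟩ := List.mem_map.mp h
        refine ⟨t⁻¹, hinv _ (by simpa using ht), ?_⟩
        rw [QuotientGroup.mk_inv, inv_eq_iff_eq_inv]
        exact h)
    refine ⟨powerRange x, J, fun p => x ^ p.1 * v p.2, s, ?_, ?_, hbij,
      fun j h1 h2 => hsT j h1 h2, ?_, ?_⟩
    · refine (isIndexInterval_powerRange x).imp id ?_
      rintro ⟨m, hm⟩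
      refine ⟨m, Nat.one_le_iff_ne_zero.mpr ?_, hm⟩
      rintro rfl
      -- If `0` were the only exponent, then `⟨x⟩` would be trivial.
      obtain ⟨i, hi, hix⟩ := (bijOn_zpow_powerRange x).surjOn (Subgroup.mem_zpowers x)
      rw [hm, Nat.cast_zero, Set.Icc_self, Set.mem_singleton_iff] at hi
      subst hi
      exact hx1 (by simpa using hix.symm)
    · refine hJ.imp id ?_
      rintro ⟨m, hm⟩
      refine ⟨m, Nat.one_le_iff_ne_zero.mpr ?_, hm⟩
      rintro rfl
      -- If the path had a single vertex, then `G ⧸ ⟨x⟩` would be trivial.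
      refine htop (eq_top_iff.mpr fun g _ => ?_)
      have key : ∀ q : G ⧸ Subgroup.zpowers x, q = w 0 := by
        intro q
        obtain ⟨j, hj, rfl⟩ := hw.surjOn (Set.mem_univ q)
        rw [hm, Nat.cast_zero, Set.Icc_self, Set.mem_singleton_iff] at hj
        rw [hj]
      exact (QuotientGroup.eq_one_iff g).mp ((key _).trans (key 1).symm)
    · intro i j _ _ _
      dsimp only
      rw [zpow_add, zpow_one, mul_right_comm]
    · intro i j _ _ _
      dsimp only
      rw [hv, mul_assoc]
end

section
/- Let G be an abelian group generated by a finite subset S with 1 ∉ S and S = S⁻¹, let x ∈ S, and assume there exists y ∈ S with y ∉ {x, x⁻¹}. Then Cay(G;S) has a hamiltonian path (a bijection v from {0,…,|G|−1} onto G if G is finite, or from ℤ onto G if G is infinite, with v(i)⁻¹·v(i+1) ∈ S for all consecutive indices) containing a useful x-triple: there is an index i such that v(i)⁻¹·v(i+1) ∈ {x, x⁻¹} and v(i+2)⁻¹·v(i+3) ∈ {x, x⁻¹}. Moreover, if the cyclic subgroup ⟨x⟩ is finite, the hamiltonian path can be chosen to contain a strongly useful x-triple: an index i with {v(i)⁻¹·v(i+1),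 v(i+2)⁻¹·v(i+3)} = {x, x⁻¹}. -/
/-!
Choose a path in the Cayley graph that meets every coset of `⟨x⟩` exactly once, with vertices `w j`
for `j` in `J = ℤ` or `J = [0, m)`. The elements `x ^ t * w j`, where `t` runs over `K = [0, n)` if
`x` has order `n` and over `K = ℤ` otherwise, exhaust `G` without repetition, and those with
neighbouring `(t, j)` are adjacent. Hence every hamiltonian path of the grid `K × J` is a hamiltonian
path of the Cayley graph, and its vertical steps (in the `t` direction) are steps `x` or `x⁻¹`.

The path `w` exists by the same construction (`IsPathTransversal.grid`): if a path meets every coset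
of `N ⊔ ⟨s⟩` once, combining it with the powers of `s` gives one that meets every coset of `N` once.
Starting from `N = ⊤`, this reaches every subgroup that generates `G` together with `S`
(`exists_pathTransversal`). It only requires a hamiltonian path in each grid `K × J`: a boustrophedon
`snake` if one side is finite, and a double spiral if both are infinite.

For the triple, suppose first that `⟨x⟩ ≠ G`, so `J` has at least two elements.
* If `K = [0, n)`, the turn of the snake at the end of its first vertical segment has steps
  `x, s, x⁻¹`, which is a strongly useful triple.
* If `K = J = ℤ`, the spiral contains three successive vertical steps (`exists_plane_path`).
* If `K = ℤ` and `J = [0, m)`, the snake runs along the rows, and a block of three rows is rerouted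
  so as to contain two vertical steps separated by one step (`exists_strip_path`).

If `G = ⟨x⟩` is infinite, the path `x ^ i` will do. If `G = ⟨x⟩` is finite, `y` is a power of `x` and
an explicit path with a single step `y` has a strongly useful triple (`exists_path_cyclic_finite`).
-/

namespace UsefulTriple

/-! ### Index sets and paths in the integer grid -/

/-- The index sets of the paths below: all of `ℤ`, or a nonempty initial segment `[0, n)`. -/
def IsIndexSet (I : Set ℤ) : Prop := I = Set.univ ∨ ∃ n : ℤ, 1 ≤ n ∧ I = Set.Ico 0 n

/-- Adjacency in the square grid `ℤ × ℤ`: the two points differ by `1` in exactly one coordinate.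
The first coordinate is called vertical. -/
def GridAdj (p q : ℤ × ℤ) : Prop :=
  (q.1 = p.1 + 1 ∧ q.2 = p.2) ∨ (q.1 = p.1 - 1 ∧ q.2 = p.2) ∨
    (q.1 = p.1 ∧ q.2 = p.2 + 1) ∨ (q.1 = p.1 ∧ q.2 = p.2 - 1)

/-- The boustrophedon path on the strip `[0, n) × ℤ`: the vertical segments `[0, n) × {q}` are
traversed in order of `q`, upwards for even `q` and downwards for odd `q`. -/
def snake (n i : ℤ) : ℤ × ℤ :=
  (if (i / n) % 2 = 0 then i % n else n - 1 - i % n, i / n)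

lemma snake_mul_add {n q r : ℤ} (hr : 0 ≤ r) (hrn : r < n) :
    snake n (n * q + r) = (if q % 2 = 0 then r else n - 1 - r, q) := by
  have h1 : (n * q + r) / n = q := by
    rw [add_comm, Int.add_mul_ediv_left _ _ (by omega), Int.ediv_eq_zero_of_lt hr hrn, zero_add]
  have h2 : (n * q + r) % n = r := by
    rw [add_comm, Int.add_mul_emod_self_left, Int.emod_eq_of_lt hr hrn]
  simp only [snake, h1, h2]

lemma snake_adj {n : ℤ} (hn : 1 ≤ n) (i : ℤ) : GridAdj (snake n i) (snake n (i + 1)) := by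
  obtain ⟨q, r, hr, hrn, rfl⟩ : ∃ q r : ℤ, 0 ≤ r ∧ r < n ∧ i = n * q + r :=
    ⟨i / n, i % n, Int.emod_nonneg _ (by omega), Int.emod_lt_of_pos _ (by omega),
      (Int.mul_ediv_add_emod i n).symm⟩
  rw [snake_mul_add hr hrn]
  by_cases h : r + 1 < n
  · rw [add_assoc, snake_mul_add (by omega) h]
    unfold GridAdj
    dsimp only
    split_ifs <;> omega
  · have e : n * q + r + 1 = n * (q + 1) + 0 := by
      have : r + 1 = n := by omega
      rw [add_assoc, this]; ring
    rw [e, snake_mul_add le_rfl (by omega)]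
    unfold GridAdj
    dsimp only
    split_ifs <;> omega

lemma snake_injective {n : ℤ} : Function.Injective (snake n) := by
  intro i j h
  simp only [snake, Prod.mk.injEq] at h
  obtain ⟨h1, h2⟩ := h
  rw [h2] at h1
  have h3 : i % n = j % n := by split_ifs at h1 <;> omega
  rw [← Int.mul_ediv_add_emod i n, ← Int.mul_ediv_add_emod j n, h2, h3]

lemma snake_bijOn {n : ℤ} (hn : 1 ≤ n) {J : Set ℤ} :
    Set.BijOn (snake n) {i | i / n ∈ J} (Set.Ico 0 n ×ˢ J) := by
  refine ⟨fun i hi => ?_, snake_injective.injOn, ?_⟩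
  · have := Int.emod_nonneg i (show n ≠ 0 by omega)
    have := Int.emod_lt_of_pos i (show 0 < n by omega)
    refine ⟨?_, hi⟩
    simp only [snake, Set.mem_Ico]
    split_ifs <;> omega
  · rintro ⟨t, q⟩ ⟨⟨h0, h1⟩, hq⟩
    simp only at h0 h1 hq
    have key : ∀ r : ℤ, 0 ≤ r → r < n → n * q + r ∈ {i | i / n ∈ J} := fun r hr hrn => by
      have := congrArg Prod.snd (snake_mul_add (q := q) hr hrn)
      simp only [snake] at this
      simpa [this] using hq
    by_cases hp : q % 2 = 0
    · exact ⟨n * q + t, key _ h0 h1, by rw [snake_mul_add h0 h1, if_pos hp]⟩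
    · refine ⟨n * q + (n - 1 - t), key _ (by omega) (by omega), ?_⟩
      rw [snake_mul_add (by omega) (by omega), if_neg hp]
      simp

lemma isIndexSet_div {n : ℤ} (hn : 1 ≤ n) {J : Set ℤ} (hJ : IsIndexSet J) :
    IsIndexSet {i | i / n ∈ J} := by
  rcases hJ with rfl | ⟨m, hm, rfl⟩
  · left; simp
  · refine .inr ⟨m * n, by nlinarith, ?_⟩
    ext i
    simp only [Set.mem_ofPred_eq, Set.mem_Ico]
    rw [Int.le_ediv_iff_mul_le (by omega), Int.ediv_lt_iff_lt_mul (by omega), zero_mul]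

/-! ### Two-way infinite paths as orbits of a permutation -/

/-- Iterating a permutation `σ` (with inverse `τ`) of an infinite set `D` in both directions
enumerates `D` bijectively, provided each point other than `a₀` can be moved closer to `a₀`, in the
lexicographic sense of `(f, g)`, by one application of `σ` or `τ`: then `D` is a single orbit, and
this orbit is aperiodic because `D` is infinite. -/
lemma exists_orbit_path {α : Type*} (D : Set α) (hD : D.Infinite) (σ τ : α → α)
    (hσ : Set.MapsTo σ D D) (hτ : Set.MapsTo τ D D)
    (hτσ : ∀ a ∈ D, τ (σ a) = a) (hστ : ∀ a ∈ D, σ (τ a) = a)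
    (a₀ : α) (ha₀ : a₀ ∈ D) (f g : α → ℕ)
    (hfg : ∀ a ∈ D, a ≠ a₀ →
      (f (σ a) < f a ∨ f (σ a) = f a ∧ g (σ a) < g a) ∨
      (f (τ a) < f a ∨ f (τ a) = f a ∧ g (τ a) < g a)) :
    ∃ v : ℤ → α, Set.BijOn v Set.univ D ∧ ∀ i, v (i + 1) = σ (v i) := by
  let e : Equiv.Perm D :=
    { toFun := fun a => ⟨σ a, hσ a.2⟩
      invFun := fun a => ⟨τ a, hτ a.2⟩
      left_inv := fun a => Subtype.ext (hτσ a a.2)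
      right_inv := fun a => Subtype.ext (hστ a a.2) }
  let b : D := ⟨a₀, ha₀⟩
  have reach : ∀ a : D, ∃ n : ℤ, (e ^ n) b = a := by
    have wf : WellFounded (fun a c : D => Prod.Lex (· < ·) (· < ·) (f a, g a) (f c, g c)) :=
      InvImage.wf (fun a : D => ((f a, g a) : ℕ × ℕ))
        (WellFounded.prod_lex wellFounded_lt wellFounded_lt)
    intro a
    induction a using wf.induction with
    | _ a ih =>
      by_cases hab : a = b
      · exact ⟨0, by simp [hab]⟩
      · rcases hfg a a.2 (fun h => hab (Subtype.ext h)) with h | h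
        · obtain ⟨n, hn⟩ := ih (e a) (Prod.lex_iff.2 h)
          refine ⟨-1 + n, ?_⟩
          rw [zpow_add, Equiv.Perm.mul_apply, hn]
          simp
        · obtain ⟨n, hn⟩ := ih (e⁻¹ a) (Prod.lex_iff.2 h)
          refine ⟨1 + n, ?_⟩
          rw [zpow_add, Equiv.Perm.mul_apply, hn]
          simp
  have aper : ∀ d : ℤ, 0 < d → (e ^ d) b ≠ b := by
    intro d hd hb
    apply hD
    have hper : ∀ k : ℤ, (e ^ (d * k)) b = b := fun k => by
      rw [zpow_mul]
      exact Equiv.Perm.zpow_apply_eq_self_of_apply_eq_self hb k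
    refine ((Set.finite_Ico (0 : ℤ) d).image (fun n => ((e ^ n) b : α))).subset ?_
    intro a ha
    obtain ⟨n, hn⟩ := reach ⟨a, ha⟩
    refine ⟨n % d, ⟨Int.emod_nonneg _ (by omega), Int.emod_lt_of_pos _ hd⟩, ?_⟩
    rw [← Int.emod_add_mul_ediv n d, zpow_add, Equiv.Perm.mul_apply, hper] at hn
    simp [hn]
  have inj : ∀ i j : ℤ, i < j → (e ^ i) b ≠ (e ^ j) b := by
    intro i j hij h
    apply aper (j - i) (by omega)
    rw [sub_eq_neg_add, zpow_add, Equiv.Perm.mul_apply, ← h, zpow_neg]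
    simp
  refine ⟨fun i => ((e ^ i) b : α), ⟨fun i _ => ((e ^ i) b).2, ?_, ?_⟩, ?_⟩
  · intro i _ j _ h
    have h' := Subtype.ext h
    rcases lt_trichotomy i j with hij | hij | hij
    · exact absurd h' (inj _ _ hij)
    · exact hij
    · exact absurd h'.symm (inj _ _ hij)
  · intro a ha
    obtain ⟨n, hn⟩ := reach ⟨a, ha⟩
    exact ⟨n, trivial, by simp [hn]⟩
  · intro i
    simp only
    rw [add_comm, zpow_add, Equiv.Perm.mul_apply, zpow_one]
    rfl

/-! ### A path through the plane -/

/-- Successor map of a one-way infinite path that starts at `(0, 0)` and fills the half-plane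
`{0 ≤ p.1}`. The shells `max p.1 |p.2| = k` are traversed one after the other, from `(0, k)` to
`(0, -k)` for odd `k` and from `(0, -k)` to `(0, k)` for even `k`. Its values are meaningless where
`p.1 < 0`. -/
def spiralOut (p : ℤ × ℤ) : ℤ × ℤ :=
  if (p.1 < p.2 ∧ p.2 % 2 = 1) ∨ (p.1 < -p.2 ∧ p.2 % 2 = 0) then (p.1 + 1, p.2)
  else if p.1 % 2 = 1 ∧ -p.1 < p.2 ∧ p.2 ≤ p.1 then (p.1, p.2 - 1)
  else if p.1 % 2 = 0 ∧ -p.1 ≤ p.2 ∧ p.2 < p.1 then (p.1, p.2 + 1)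
  else if 0 < p.1 then (p.1 - 1, p.2)
  else if p.2 % 2 = 0 then (0, p.2 + 1)
  else (0, p.2 - 1)

/-- Predecessor map of the path of `spiralOut`; its starting point `(0, 0)` is sent to `(-1, 0)`,
outside the half-plane. -/
def spiralIn (p : ℤ × ℤ) : ℤ × ℤ :=
  if p = (0, 0) then (-1, 0)
  else if (p.1 < -p.2 ∧ p.2 % 2 = 1) ∨ (p.1 < p.2 ∧ p.2 % 2 = 0) then (p.1 + 1, p.2)
  else if p.1 % 2 = 1 ∧ -p.1 ≤ p.2 ∧ p.2 < p.1 then (p.1, p.2 + 1)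
  else if p.1 % 2 = 0 ∧ -p.1 < p.2 ∧ p.2 ≤ p.1 then (p.1, p.2 - 1)
  else if 0 < p.1 then (p.1 - 1, p.2)
  else if 0 < p.2 then (0, p.2 - 1)
  else (0, p.2 + 1)

/-- The reflection exchanging the half-planes `{0 ≤ p.1}` and `{p.1 < 0}`. -/
def flip (p : ℤ × ℤ) : ℤ × ℤ := (-1 - p.1, p.2)

/-- Successor map of a two-way infinite path filling the plane: the mirror image of the half-plane
path run backwards up to `(-1, 0)`, followed by the half-plane path from `(0, 0)`. Its inverse is
`flip ∘ spiral ∘ flip`. -/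
def spiral (p : ℤ × ℤ) : ℤ × ℤ := if 0 ≤ p.1 then spiralOut p else flip (spiralIn (flip p))

lemma spiralOut_nonneg {p : ℤ × ℤ} (hp : 0 ≤ p.1) : 0 ≤ (spiralOut p).1 := by
  unfold spiralOut; split_ifs <;> dsimp only <;> omega

lemma spiralIn_nonneg {p : ℤ × ℤ} (hp : 0 ≤ p.1) (h : p ≠ (0, 0)) : 0 ≤ (spiralIn p).1 := by
  unfold spiralIn
  rw [if_neg h]
  split_ifs <;> dsimp only <;> omega

lemma spiralIn_spiralOut {p : ℤ × ℤ} (hp : 0 ≤ p.1) : spiralIn (spiralOut p) = p := by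
  obtain ⟨a, b⟩ := p
  simp only at hp
  unfold spiralOut
  split_ifs <;> unfold spiralIn <;> simp only [Prod.mk.injEq] at * <;> split_ifs <;>
    (try rw [Prod.mk.injEq]) <;> omega

lemma spiralOut_spiralIn {p : ℤ × ℤ} (hp : 0 ≤ p.1) (h : p ≠ (0, 0)) :
    spiralOut (spiralIn p) = p := by
  obtain ⟨a, b⟩ := p
  simp only [ne_eq, Prod.mk.injEq] at hp h
  unfold spiralIn
  split_ifs <;> unfold spiralOut <;> simp only [Prod.mk.injEq] at * <;> split_ifs <;>
    (try rw [Prod.mk.injEq]) <;> omega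

/-- The number of the shell of a point with `0 ≤ p.1`. -/
def shell (p : ℤ × ℤ) : ℤ := max p.1 (max p.2 (-p.2))

/-- The position of a point of the half-plane `{0 ≤ p.1}` in the traversal of its shell, which
consists of `4 * k + 1` points when its number is `k`. -/
def shellPos (p : ℤ × ℤ) : ℤ :=
  if (p.1 < p.2 ∧ p.2 % 2 = 1) ∨ (p.1 < -p.2 ∧ p.2 % 2 = 0) then p.1
  else if p.1 % 2 = 1 ∧ -p.1 < p.2 ∧ p.2 ≤ p.1 then 2 * p.1 - p.2
  else if p.1 % 2 = 0 ∧ -p.1 ≤ p.2 ∧ p.2 < p.1 then 2 * p.1 + p.2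
  else 4 * shell p - p.1

lemma shell_nonneg {p : ℤ × ℤ} (hp : 0 ≤ p.1) : 0 ≤ shell p := by
  unfold shell
  omega

lemma shellPos_nonneg {p : ℤ × ℤ} (hp : 0 ≤ p.1) : 0 ≤ shellPos p := by
  unfold shellPos shell
  split_ifs <;> omega

set_option maxHeartbeats 1000000 in
lemma spiralIn_decreases {p : ℤ × ℤ} (hp : 0 ≤ p.1) (h : p ≠ (0, 0)) :
    shell (spiralIn p) < shell p ∨
    shell (spiralIn p) = shell p ∧ shellPos (spiralIn p) < shellPos p := by
  obtain ⟨a, b⟩ := p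
  simp only [ne_eq, Prod.mk.injEq] at hp h
  unfold spiralIn
  split_ifs <;> simp only [shellPos, shell, Prod.mk.injEq] at * <;> split_ifs <;> omega

lemma flip_flip (p : ℤ × ℤ) : flip (flip p) = p := by simp [flip]

lemma spiral_flip_spiral (p : ℤ × ℤ) : spiral (flip (spiral (flip p))) = p := by
  by_cases hp : 0 ≤ p.1
  · have h1 : ¬ 0 ≤ (flip p).1 := by dsimp only [flip]; omega
    rw [spiral, spiral, if_neg h1, flip_flip, flip_flip]
    by_cases h : p = (0, 0)
    · subst h; decide
    · rw [if_pos (spiralIn_nonneg hp h), spiralOut_spiralIn hp h]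
  · have h1 : 0 ≤ (flip p).1 := by dsimp only [flip]; omega
    have h2 : ¬ 0 ≤ (flip (spiralOut (flip p))).1 := by
      have := spiralOut_nonneg h1
      simp only [flip] at this ⊢
      omega
    rw [spiral, spiral, if_pos h1, if_neg h2, flip_flip, spiralIn_spiralOut h1, flip_flip]

lemma spiral_adj (p : ℤ × ℤ) : GridAdj p (spiral p) := by
  obtain ⟨a, b⟩ := p
  unfold spiral flip GridAdj spiralOut spiralIn
  simp only [Prod.mk.injEq]
  split_ifs <;> dsimp only <;> omega

/-- The grid path `u` makes two vertical steps with exactly one step between them. -/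
def HasVerticalTriple (I : Set ℤ) (u : ℤ → ℤ × ℤ) : Prop :=
  ∃ i δ ε : ℤ, i ∈ I ∧ i + 1 ∈ I ∧ i + 2 ∈ I ∧ i + 3 ∈ I ∧
    (δ = 1 ∨ δ = -1) ∧ (ε = 1 ∨ ε = -1) ∧
    u (i + 1) = ((u i).1 + δ, (u i).2) ∧ u (i + 3) = ((u (i + 2)).1 + ε, (u (i + 2)).2)

lemma exists_plane_path : ∃ u : ℤ → ℤ × ℤ, Set.BijOn u Set.univ (Set.univ ×ˢ Set.univ) ∧
    (∀ i, GridAdj (u i) (u (i + 1))) ∧ HasVerticalTriple Set.univ u := by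
  obtain ⟨u, hu, hs⟩ := exists_orbit_path (Set.univ : Set (ℤ × ℤ)) Set.infinite_univ spiral
    (fun p => flip (spiral (flip p))) (fun _ _ => trivial) (fun _ _ => trivial)
    (fun p _ => by
      have := spiral_flip_spiral (flip p)
      rw [flip_flip] at this
      rw [this, flip_flip])
    (fun p _ => spiral_flip_spiral p) (0, 0) trivial
    (fun p => if 0 ≤ p.1 then (shell p).toNat else (shell (flip p)).toNat + 1)
    (fun p => if 0 ≤ p.1 then (shellPos p).toNat else (shellPos (flip p)).toNat)
    (fun p _ h0 => by
      by_cases hp : 0 ≤ p.1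
      · right
        have h1 : ¬ 0 ≤ (flip p).1 := by dsimp only [flip]; omega
        have e : flip (spiral (flip p)) = spiralIn p := by
          rw [spiral, if_neg h1, flip_flip, flip_flip]
        simp only [e, if_pos hp, if_pos (spiralIn_nonneg hp h0)]
        have := spiralIn_decreases hp h0
        have := shell_nonneg hp
        have := shell_nonneg (spiralIn_nonneg hp h0)
        have := shellPos_nonneg hp
        have := shellPos_nonneg (spiralIn_nonneg hp h0)
        omega
      · left
        have h1 : 0 ≤ (flip p).1 := by dsimp only [flip]; omega
        have e : spiral p = flip (spiralIn (flip p)) := by rw [spiral, if_neg hp]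
        by_cases h2 : flip p = (0, 0)
        · have : p = (-1, 0) := by rw [← flip_flip p, h2]; rfl
          subst this
          left; decide
        · have h3 : ¬ 0 ≤ (flip (spiralIn (flip p))).1 := by
            have := spiralIn_nonneg h1 h2
            dsimp only [flip] at this ⊢
            omega
          have := spiralIn_decreases h1 h2
          have := shell_nonneg h1
          have := shell_nonneg (spiralIn_nonneg h1 h2)
          have := shellPos_nonneg h1
          have := shellPos_nonneg (spiralIn_nonneg h1 h2)
          simp only [e, if_neg hp, if_neg h3, flip_flip]
          omega)
  refine ⟨u, by rwa [Set.univ_prod_univ], fun i => hs i ▸ spiral_adj _, ?_⟩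
  -- On the shell `k = 3` the path climbs from `(0, 3)` to `(3, 3)`.
  obtain ⟨i, -, hi⟩ := hu.surjOn (Set.mem_univ ((0, 3) : ℤ × ℤ))
  have h1 : u (i + 1) = (1, 3) := by rw [hs, hi]; decide
  have h2 : u (i + 2) = (2, 3) := by
    rw [show i + 2 = i + 1 + 1 by ring, hs, h1]; decide
  have h3 : u (i + 3) = (3, 3) := by
    rw [show i + 3 = i + 2 + 1 by ring, hs, h2]; decide
  exact ⟨i, 1, 1, trivial, trivial, trivial, trivial, .inl rfl, .inl rfl,
    by rw [h1, hi]; rfl, by rw [h3, h2]; rfl⟩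

/-! ### A path through a strip of finite width -/

/-- Successor map of a two-way infinite path filling the strip `ℤ × [0, m)`. Rows outside the block
`[0, 3) × [0, m)` are traversed alternately from left to right (even rows) and right to left (odd
rows). The block is traversed from its corner `(0, 0)` to its corner `(2, m - 1)`: first the columns
`p.2 < c`, alternately up and down, and then the remaining columns by rows. Here `c = m` for odd `m`,
and `c = m - 2` for even `m`, so that the second part has two columns. -/
def stripNext (m c : ℤ) (p : ℤ × ℤ) : ℤ × ℤ :=
  if 0 ≤ p.1 ∧ p.1 ≤ 2 ∧ p.2 < c then
    if p.2 % 2 = 0 then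
      if p.1 < 2 then (p.1 + 1, p.2) else if p.2 + 1 < m then (2, p.2 + 1) else (3, p.2)
    else if 0 < p.1 then (p.1 - 1, p.2) else (0, p.2 + 1)
  else if p.1 % 2 = 0 then
    if p.2 + 1 < m then (p.1, p.2 + 1) else (p.1 + 1, p.2)
  else if 0 < p.2 ∧ ¬ (p.1 = 1 ∧ p.2 = c) then (p.1, p.2 - 1) else (p.1 + 1, p.2)

/-- The inverse of `stripNext` on the strip. -/
def stripPrev (m c : ℤ) (p : ℤ × ℤ) : ℤ × ℤ :=
  if 0 ≤ p.1 ∧ p.1 ≤ 2 ∧ p.2 < c then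
    if p.2 % 2 = 0 then
      if 0 < p.1 then (p.1 - 1, p.2) else if 0 < p.2 then (0, p.2 - 1) else (-1, 0)
    else if p.1 < 2 then (p.1 + 1, p.2) else (2, p.2 - 1)
  else if p.1 % 2 = 0 then
    if 0 < p.2 ∧ ¬ (p.1 = 2 ∧ p.2 = c) then (p.1, p.2 - 1) else (p.1 - 1, p.2)
  else if p.2 + 1 < m then (p.1, p.2 + 1) else (p.1 - 1, p.2)

/-- The distance of a row from the block of rows `0, 1, 2`, up to a shift; it vanishes on the block. -/
def stripDist (p : ℤ × ℤ) : ℤ := if p.1 < 0 then -p.1 else if p.1 ≤ 2 then 0 else p.1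

/-- The number of steps from a point to the end of its row (below the block) or from the beginning
of its row or of the block (elsewhere). -/
def stripPos (m c : ℤ) (p : ℤ × ℤ) : ℤ :=
  if p.1 < 0 then
    if p.1 % 2 = 0 then m - 1 - p.2 else p.2
  else if p.1 ≤ 2 ∧ p.2 < c then
    if p.2 % 2 = 0 then 3 * p.2 + p.1 else 3 * p.2 + (2 - p.1)
  else if p.1 ≤ 2 then
    if p.1 % 2 = 0 then 3 * c + 2 * p.1 + (p.2 - c) else 3 * c + 2 * p.1 + (1 - (p.2 - c))
  else if p.1 % 2 = 0 then p.2 else m - 1 - p.2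

lemma stripNext_mem {m c : ℤ} (hm : 2 ≤ m)
    (hc : (m % 2 = 1 ∧ c = m) ∨ (m % 2 = 0 ∧ c = m - 2)) {a b : ℤ} (h0 : 0 ≤ b) (h1 : b < m) :
    0 ≤ (stripNext m c (a, b)).2 ∧ (stripNext m c (a, b)).2 < m := by
  unfold stripNext
  dsimp only
  split_ifs <;> dsimp only <;> omega

lemma stripPrev_mem {m c : ℤ} (hm : 2 ≤ m) {a b : ℤ} (h0 : 0 ≤ b) (h1 : b < m) :
    0 ≤ (stripPrev m c (a, b)).2 ∧ (stripPrev m c (a, b)).2 < m := by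
  unfold stripPrev
  dsimp only
  split_ifs <;> dsimp only <;> omega

lemma stripPrev_stripNext {m c : ℤ} (hc : (m % 2 = 1 ∧ c = m) ∨ (m % 2 = 0 ∧ c = m - 2)) {a b : ℤ} (h0 : 0 ≤ b) (h1 : b < m) :
    stripPrev m c (stripNext m c (a, b)) = (a, b) := by
  unfold stripNext
  dsimp only
  split_ifs <;> unfold stripPrev <;> dsimp only <;> split_ifs <;>
    rw [Prod.mk.injEq] <;> omega

lemma stripNext_stripPrev {m c : ℤ} (hc : (m % 2 = 1 ∧ c = m) ∨ (m % 2 = 0 ∧ c = m - 2)) {a b : ℤ} (h0 : 0 ≤ b) (h1 : b < m) :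
    stripNext m c (stripPrev m c (a, b)) = (a, b) := by
  unfold stripPrev
  dsimp only
  split_ifs <;> unfold stripNext <;> dsimp only <;> split_ifs <;>
    rw [Prod.mk.injEq] <;> omega

lemma stripNext_adj {m c : ℤ} {a b : ℤ} : GridAdj (a, b) (stripNext m c (a, b)) := by
  unfold stripNext GridAdj
  dsimp only
  split_ifs <;> dsimp only <;> omega

set_option maxHeartbeats 1000000 in
lemma stripPrev_decreases {m c : ℤ} (hm : 2 ≤ m)
    (hc : (m % 2 = 1 ∧ c = m) ∨ (m % 2 = 0 ∧ c = m - 2)) {a b : ℤ} (h0 : 0 ≤ b) (h1 : b < m) (ha : 0 ≤ a)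
    (hab : ¬ (a = 0 ∧ b = 0)) :
    (stripDist (stripPrev m c (a, b))).toNat < (stripDist (a, b)).toNat ∨
    (stripDist (stripPrev m c (a, b))).toNat = (stripDist (a, b)).toNat ∧
      (stripPos m c (stripPrev m c (a, b))).toNat < (stripPos m c (a, b)).toNat := by
  unfold stripPrev
  dsimp only
  split_ifs <;> unfold stripDist stripPos <;> dsimp only <;> split_ifs <;> omega

lemma stripNext_decreases {m c : ℤ} {a b : ℤ} (ha : a < 0) :
    (stripDist (stripNext m c (a, b))).toNat < (stripDist (a, b)).toNat ∨
    (stripDist (stripNext m c (a, b))).toNat = (stripDist (a, b)).toNat ∧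
      (stripPos m c (stripNext m c (a, b))).toNat < (stripPos m c (a, b)).toNat := by
  unfold stripNext
  dsimp only
  split_ifs <;> unfold stripDist stripPos <;> dsimp only <;> split_ifs <;> omega

lemma exists_strip_path {m : ℤ} (hm : 2 ≤ m) :
    ∃ u : ℤ → ℤ × ℤ, Set.BijOn u Set.univ (Set.univ ×ˢ Set.Ico 0 m) ∧
    (∀ i, GridAdj (u i) (u (i + 1))) ∧ HasVerticalTriple Set.univ u := by
  obtain ⟨c, hc⟩ : ∃ c : ℤ, (m % 2 = 1 ∧ c = m) ∨ (m % 2 = 0 ∧ c = m - 2) := by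
    rcases Int.emod_two_eq_zero_or_one m with h | h
    · exact ⟨m - 2, .inr ⟨h, rfl⟩⟩
    · exact ⟨m, .inl ⟨h, rfl⟩⟩
  have hinf : ((Set.univ : Set ℤ) ×ˢ Set.Ico 0 m).Infinite :=
    Set.infinite_univ.prod_left ⟨0, by constructor <;> omega⟩
  obtain ⟨u, hu, hs⟩ := exists_orbit_path ((Set.univ : Set ℤ) ×ˢ Set.Ico 0 m) hinf
    (stripNext m c) (stripPrev m c)
    (fun p hp => ⟨trivial, stripNext_mem hm hc hp.2.1 hp.2.2⟩)
    (fun p hp => ⟨trivial, stripPrev_mem hm hp.2.1 hp.2.2⟩)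
    (fun p hp => stripPrev_stripNext hc hp.2.1 hp.2.2)
    (fun p hp => stripNext_stripPrev hc hp.2.1 hp.2.2)
    (0, 0) ⟨trivial, by constructor <;> dsimp only <;> omega⟩
    (fun p => (stripDist p).toNat) (fun p => (stripPos m c p).toNat)
    (fun p hp h0 => by
      by_cases ha : 0 ≤ p.1
      · exact .inr (stripPrev_decreases hm hc hp.2.1 hp.2.2 ha
          fun h => h0 (Prod.ext h.1 h.2))
      · exact .inl (stripNext_decreases (by omega)))
  refine ⟨u, hu, fun i => hs i ▸ stripNext_adj, ?_⟩
  -- For odd `m` the triple is at the turn from column `0` to column `1`; for even `m` it is in the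
  -- part of width two.
  rcases hc with ⟨hp, rfl⟩ | ⟨hp, rfl⟩
  · obtain ⟨i, -, hi⟩ := hu.surjOn (show ((1, 0) : ℤ × ℤ) ∈ _ from
      ⟨trivial, by constructor <;> dsimp only <;> omega⟩)
    have h1 : u (i + 1) = (2, 0) := by
      rw [hs, hi]; unfold stripNext; dsimp only; split_ifs <;> rw [Prod.mk.injEq] <;> omega
    have h2 : u (i + 2) = (2, 1) := by
      rw [show i + 2 = i + 1 + 1 by ring, hs, h1]
      unfold stripNext; dsimp only; split_ifs <;> rw [Prod.mk.injEq] <;> omega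
    have h3 : u (i + 3) = (1, 1) := by
      rw [show i + 3 = i + 2 + 1 by ring, hs, h2]
      unfold stripNext; dsimp only; split_ifs <;> rw [Prod.mk.injEq] <;> omega
    exact ⟨i, 1, -1, trivial, trivial, trivial, trivial, .inl rfl, .inr rfl,
      by rw [h1, hi]; rfl, by rw [h3, h2]; rfl⟩
  · obtain ⟨i, -, hi⟩ := hu.surjOn (show ((0, m - 1) : ℤ × ℤ) ∈ _ from
      ⟨trivial, by constructor <;> dsimp only <;> omega⟩)
    have h1 : u (i + 1) = (1, m - 1) := by
      rw [hs, hi]; unfold stripNext; dsimp only; split_ifs <;> rw [Prod.mk.injEq] <;> omega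
    have h2 : u (i + 2) = (1, m - 2) := by
      rw [show i + 2 = i + 1 + 1 by ring, hs, h1]
      unfold stripNext; dsimp only; split_ifs <;> rw [Prod.mk.injEq] <;> omega
    have h3 : u (i + 3) = (2, m - 2) := by
      rw [show i + 3 = i + 2 + 1 by ring, hs, h2]
      unfold stripNext; dsimp only; split_ifs <;> rw [Prod.mk.injEq] <;> omega
    exact ⟨i, 1, 1, trivial, trivial, trivial, trivial, .inl rfl, .inl rfl,
      by rw [h1, hi]; rfl, by rw [h3, h2]; rfl⟩

/-! ### Paths filling a product of two index sets -/

/-- `u`, restricted to `I`, is a hamiltonian path of the grid `K × J`. -/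
def IsGridPath (I : Set ℤ) (u : ℤ → ℤ × ℤ) (K J : Set ℤ) : Prop :=
  IsIndexSet I ∧ Set.BijOn u I (K ×ˢ J) ∧ ∀ i ∈ I, i + 1 ∈ I → GridAdj (u i) (u (i + 1))

lemma isGridPath_snake {n : ℤ} (hn : 1 ≤ n) {J : Set ℤ} (hJ : IsIndexSet J) :
    IsGridPath {i | i / n ∈ J} (snake n) (Set.Ico 0 n) J :=
  ⟨isIndexSet_div hn hJ, snake_bijOn hn, fun i _ _ => snake_adj hn i⟩

lemma exists_gridPath {K J : Set ℤ} (hK : IsIndexSet K) (hJ : IsIndexSet J) :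
    ∃ I u, IsGridPath I u K J := by
  rcases hK with rfl | ⟨n, hn, rfl⟩
  · rcases hJ with rfl | ⟨m, hm, rfl⟩
    · obtain ⟨u, hu, hs, -⟩ := exists_plane_path
      exact ⟨_, u, .inl rfl, hu, fun i _ _ => hs i⟩
    · refine ⟨_, fun i => (snake m i).swap, isIndexSet_div hm (.inl rfl), ?_, fun i _ _ => ?_⟩
      · refine ⟨fun i hi => ((snake_bijOn hm).mapsTo hi).symm, fun i _ j _ h =>
          snake_injective (Prod.swap_injective h), fun p hp => ?_⟩
        obtain ⟨i, hi, h⟩ := (snake_bijOn hm).surjOn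
          (show p.swap ∈ Set.Ico 0 m ×ˢ Set.univ from hp.symm)
        exact ⟨i, hi, by simp [h]⟩
      · have := snake_adj hm i
        simp only [GridAdj, Prod.fst_swap, Prod.snd_swap] at this ⊢
        omega
  · exact ⟨_, _, isGridPath_snake hn hJ⟩

lemma exists_gridPath_triple {J : Set ℤ} (hJ : IsIndexSet J) (h1 : (1 : ℤ) ∈ J) :
    ∃ I u, IsGridPath I u Set.univ J ∧ HasVerticalTriple I u := by
  rcases hJ with rfl | ⟨m, hm, rfl⟩
  · obtain ⟨u, hu, hs, h⟩ := exists_plane_path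
    exact ⟨_, u, ⟨.inl rfl, hu, fun i _ _ => hs i⟩, h⟩
  · obtain ⟨u, hu, hs, h⟩ := exists_strip_path (m := m) h1.2
    exact ⟨_, u, ⟨.inl rfl, hu, fun i _ _ => hs i⟩, h⟩

lemma snake_triple {n : ℤ} (hn : 2 ≤ n) :
    snake n (n - 2) = (n - 2, 0) ∧ snake n (n - 2 + 1) = (n - 1, 0) ∧
    snake n (n - 2 + 2) = (n - 1, 1) ∧ snake n (n - 2 + 3) = (n - 2, 1) := by
  have h1 := snake_mul_add (n := n) (q := 0) (r := n - 2) (by omega) (by omega)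
  have h2 := snake_mul_add (n := n) (q := 0) (r := n - 1) (by omega) (by omega)
  have h3 := snake_mul_add (n := n) (q := 1) (r := 0) (by omega) (by omega)
  have h4 := snake_mul_add (n := n) (q := 1) (r := 1) (by omega) (by omega)
  norm_num at h1 h2 h3 h4
  refine ⟨h1, ?_, ?_, ?_⟩
  · rw [← h2]; congr 1; ring
  · rw [← h3]; congr 1; ring
  · rw [show n - 2 + 3 = n + 1 by ring, h4]; congr 1; ring

/-! ### Paths that are transversals of a subgroup -/

variable {G : Type*} [CommGroup G]

/-- `w`, restricted to `J`, is a path with steps in `T` that meets every coset of `N` exactly once,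
that is, the lift to `G` of a hamiltonian path of `G ⧸ N`. For `N = ⊥` it is a hamiltonian path of
`G`. -/
def IsPathTransversal (N : Subgroup G) (T : Set G) (J : Set ℤ) (w : ℤ → G) : Prop :=
  (∀ j ∈ J, j + 1 ∈ J → (w j)⁻¹ * w (j + 1) ∈ T) ∧ ∀ g : G, ∃! j, j ∈ J ∧ (w j)⁻¹ * g ∈ N

/-- The powers `s ^ t`, `t ∈ K`, represent every coset of `N` in `N ⊔ ⟨s⟩` exactly once. -/
def IsPowTransversal (N : Subgroup G) (s : G) (K : Set ℤ) : Prop :=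
  ∀ h ∈ N ⊔ Subgroup.zpowers s, ∃! t, t ∈ K ∧ (s ^ t)⁻¹ * h ∈ N

/-- The exponents needed are `[0, n)`, where `n` is the order of `s` modulo `N`, and all of `ℤ` if
that order is infinite. -/
lemma exists_powTransversal (N : Subgroup G) (s : G) :
    ((∀ t : ℤ, s ^ t ∈ N → t = 0) ∧ IsPowTransversal N s Set.univ) ∨
    ∃ n : ℤ, 1 ≤ n ∧ s ^ n ∈ N ∧ IsPowTransversal N s (Set.Ico 0 n) := by
  have key : ∀ t : ℤ, s ^ t ∈ N ↔ (orderOf (s : G ⧸ N) : ℤ) ∣ t := fun t => by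
    rw [orderOf_dvd_iff_zpow_eq_one, ← QuotientGroup.mk_zpow, QuotientGroup.eq_one_iff]
  have decomp : ∀ h ∈ N ⊔ Subgroup.zpowers s, ∃ a : ℤ, ∀ t : ℤ,
      (s ^ t)⁻¹ * h ∈ N ↔ s ^ (a - t) ∈ N := by
    intro h hh
    obtain ⟨k, hk, z, ⟨a, rfl⟩, rfl⟩ := Subgroup.mem_sup.1 hh
    refine ⟨a, fun t => ?_⟩
    dsimp only
    rw [mul_left_comm, N.mul_mem_cancel_left hk, zpow_sub, mul_comm]
  rcases Nat.eq_zero_or_pos (orderOf (s : G ⧸ N)) with h0 | hpos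
  · left
    simp only [h0, Nat.cast_zero, zero_dvd_iff] at key
    refine ⟨fun t => (key t).1, fun h hh => ?_⟩
    obtain ⟨a, ha⟩ := decomp h hh
    refine ⟨a, ⟨trivial, by simp [ha]⟩, fun t ht => ?_⟩
    have := (key _).1 ((ha t).1 ht.2)
    omega
  · right
    set n : ℤ := (orderOf (s : G ⧸ N) : ℤ)
    have hn : 0 < n := by omega
    refine ⟨n, hn, (key n).2 dvd_rfl, fun h hh => ?_⟩
    obtain ⟨a, ha⟩ := decomp h hh
    refine ⟨a % n, ⟨⟨Int.emod_nonneg _ (by omega), Int.emod_lt_of_pos _ hn⟩, ?_⟩, ?_⟩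
    · rw [ha, key]
      exact Int.dvd_self_sub_emod
    · rintro t ⟨⟨ht0, ht1⟩, ht⟩
      have := (key _).1 ((ha t).1 ht)
      rw [← Int.emod_eq_of_lt ht0 ht1]
      exact Int.modEq_iff_dvd.2 this

/-- The points `s ^ t * w j`, `(t, j) ∈ K × J`, form a grid in the Cayley graph, so a hamiltonian
path of `K × J` turns a path transversal of `N ⊔ ⟨s⟩` into one of `N`. -/
lemma IsPathTransversal.grid {N : Subgroup G} {T : Set G} (hT : ∀ g ∈ T, g⁻¹ ∈ T)
    {s : G} (hs : s ∈ T) {J K I : Set ℤ} {w : ℤ → G} {u : ℤ → ℤ × ℤ}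
    (hw : IsPathTransversal (N ⊔ Subgroup.zpowers s) T J w) (hK : IsPowTransversal N s K)
    (hu : IsGridPath I u K J) :
    IsPathTransversal N T I (fun i => s ^ (u i).1 * w (u i).2) := by
  obtain ⟨-, hbij, hadj⟩ := hu
  refine ⟨fun i hi hi' => ?_, fun g => ?_⟩
  · have m1 := hbij.mapsTo hi
    have m2 := hbij.mapsTo hi'
    dsimp only
    rcases hadj i hi hi' with ⟨h1, h2⟩ | ⟨h1, h2⟩ | ⟨h1, h2⟩ | ⟨h1, h2⟩
    · rw [h1, h2, zpow_add_one]
      convert hs using 1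
      rw [mul_inv, mul_mul_mul_comm]
      simp
    · rw [h1, h2, zpow_sub_one]
      convert hT _ hs using 1
      rw [mul_inv, mul_mul_mul_comm]
      simp
    · have := hw.1 _ m1.2 (h2 ▸ m2.2)
      rw [h1, h2]
      convert this using 1
      rw [mul_inv, mul_mul_mul_comm]
      simp
    · have := hT _ (hw.1 (u (i + 1)).2 m2.2 (by rw [h2, sub_add_cancel]; exact m1.2))
      rw [h1]
      convert this using 1
      rw [h2, sub_add_cancel, mul_inv, mul_mul_mul_comm]
      simp [mul_comm]
  · obtain ⟨j, ⟨hjJ, hj⟩, juniq⟩ := hw.2 g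
    obtain ⟨t, ⟨htK, ht⟩, tuniq⟩ := hK _ hj
    obtain ⟨i, hi, hui⟩ := hbij.surjOn (show (t, j) ∈ K ×ˢ J from ⟨htK, hjJ⟩)
    refine ⟨i, ⟨hi, ?_⟩, ?_⟩
    · dsimp only
      rw [hui, mul_inv, mul_assoc]
      exact ht
    · rintro i' ⟨hi', hg⟩
      have m1 := hbij.mapsTo hi'
      rw [mul_inv, mul_assoc] at hg
      have ej : (u i').2 = j := juniq _ ⟨m1.2, by
        have := Subgroup.mul_mem_sup hg (Subgroup.zpow_mem_zpowers s (u i').1)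
        rwa [mul_comm, mul_inv_cancel_left] at this⟩
      have et : (u i').1 = t := tuniq _ ⟨m1.1, by rw [← ej]; exact hg⟩
      exact hbij.injOn hi' hi (by rw [hui, ← ej, ← et])

/-- Path transversals exist for every subgroup; the generators in `S` are adjoined to `N` one at a
time. -/
lemma exists_pathTransversal {T : Set G} (hT : ∀ g ∈ T, g⁻¹ ∈ T) {S : Set G} (hS : S.Finite)
    (hST : S ⊆ T) : ∀ N : Subgroup G, N ⊔ Subgroup.closure S = ⊤ →
      ∃ J w, IsIndexSet J ∧ IsPathTransversal N T J w := by
  induction S, hS using Set.Finite.induction_on with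
  | empty =>
    intro N hN
    simp only [Subgroup.closure_empty, sup_bot_eq] at hN
    subst hN
    refine ⟨Set.Ico 0 1, fun _ => 1, .inr ⟨1, le_rfl, rfl⟩, fun j hj hj' => ?_, fun g => ?_⟩
    · simp only [Set.mem_Ico] at hj hj'
      omega
    · refine ⟨0, by simp, fun j hj => ?_⟩
      have := hj.1
      simp only [Set.mem_Ico] at this
      omega
  | @insert s S _ _ ih =>
    intro N hN
    obtain ⟨J, w, hJ, hw⟩ := ih ((Set.subset_insert _ _).trans hST) (N ⊔ Subgroup.zpowers s) (by
      rw [← hN, Set.insert_eq, Subgroup.closure_union, Subgroup.zpowers_eq_closure, sup_assoc])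
    obtain ⟨K, hK, hKs⟩ : ∃ K, IsIndexSet K ∧ IsPowTransversal N s K := by
      rcases exists_powTransversal N s with ⟨-, h⟩ | ⟨n, hn, -, h⟩
      · exact ⟨_, .inl rfl, h⟩
      · exact ⟨_, .inr ⟨n, hn, rfl⟩, h⟩
    obtain ⟨I, u, hu⟩ := exists_gridPath hK hJ
    exact ⟨I, _, hu.1, hw.grid hT (hST (Set.mem_insert _ _)) hKs hu⟩

lemma IsPathTransversal.bijOn {T : Set G} {I : Set ℤ} {v : ℤ → G}
    (hv : IsPathTransversal ⊥ T I v) : Set.BijOn v I Set.univ := by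
  refine ⟨fun _ _ => trivial, fun i hi j hj h => ?_, fun g _ => ?_⟩
  · exact (hv.2 (v i)).unique ⟨hi, by simp⟩ ⟨hj, by simp [h]⟩
  · obtain ⟨j, ⟨hj, h⟩, -⟩ := hv.2 g
    exact ⟨j, hj, inv_mul_eq_one.1 (Subgroup.mem_bot.1 h)⟩

lemma indexSet_of_bijOn {G : Type*} {I : Set ℤ} {v : ℤ → G} (hI : IsIndexSet I)
    (hv : Set.BijOn v I Set.univ) :
    (Finite G ∧ I = Set.Icc 0 ((Nat.card G : ℤ) - 1)) ∨ (Infinite G ∧ I = Set.univ) := by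
  rcases hI with rfl | ⟨n, hn, rfl⟩
  · exact .inr ⟨Infinite.of_injective v (Set.injOn_univ.1 hv.injOn), rfl⟩
  · left
    have hfin : (Set.univ : Set G).Finite := hv.image_eq ▸ (Set.finite_Ico 0 n).image v
    have hcard : Nat.card G = n.toNat := by
      rw [← Set.ncard_univ, ← hv.image_eq, hv.injOn.ncard_image,
        Set.ncard_eq_toFinset_card']
      simp
    refine ⟨Set.finite_univ_iff.1 hfin, ?_⟩
    ext i
    simp only [Set.mem_Ico, Set.mem_Icc, hcard]
    omega

/-- A vertical grid step by `δ` is a step by `s ^ δ` in the Cayley graph. -/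
lemma grid_step (s : G) (w : ℤ → G) {p q : ℤ × ℤ} {δ : ℤ} (h : q = (p.1 + δ, p.2)) :
    (s ^ p.1 * w p.2)⁻¹ * (s ^ q.1 * w q.2) = s ^ δ := by
  subst h
  rw [mul_inv, mul_mul_mul_comm, zpow_add]
  simp

/-! ### Useful triples -/

/-- The path `v` contains a useful `x`-triple, which is strongly useful if `strong` holds. -/
def HasTriple (x : G) (I : Set ℤ) (v : ℤ → G) (strong : Prop) : Prop :=
  ∃ i δ ε : ℤ, i ∈ I ∧ i + 1 ∈ I ∧ i + 2 ∈ I ∧ i + 3 ∈ I ∧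
    (δ = 1 ∨ δ = -1) ∧ (ε = 1 ∨ ε = -1) ∧ (strong → ε = -δ) ∧
    (v i)⁻¹ * v (i + 1) = x ^ δ ∧ (v (i + 2))⁻¹ * v (i + 3) = x ^ ε

/-- The case in which `G = ⟨x⟩` is cyclic of order `n`. With `y = x ^ k`, `2 ≤ k ≤ n - 2`, the path
runs through the exponents `k + 2, …, n, n + 1, k + 1, k, …, 2`, whose only step other than `x` or
`x⁻¹` is the step `y` from `n + 1` to `k + 1`; around it lie a step `x` and a step `x⁻¹`. -/
lemma exists_path_cyclic_finite {S : Set G} (h1 : (1 : G) ∉ S) (hS : ∀ g ∈ S, g⁻¹ ∈ S)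
    {x y : G} (hx : x ∈ S) (hy : y ∈ S) (hyx : y ≠ x) (hyx' : y ≠ x⁻¹)
    (htop : ∀ g : G, g ∈ (⊥ : Subgroup G) ⊔ Subgroup.zpowers x)
    {n : ℤ} (hxn : x ^ n = 1) (hn : IsPowTransversal ⊥ x (Set.Ico 0 n)) :
    ∃ v : ℤ → G, IsPathTransversal ⊥ S (Set.Ico 0 n) v ∧
      HasTriple x (Set.Ico 0 n) v True := by
  obtain ⟨k, ⟨⟨hk0, hkn⟩, hk⟩, -⟩ := hn y (htop y)
  rw [Subgroup.mem_bot, inv_mul_eq_one] at hk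
  have hk_ne0 : k ≠ 0 := by rintro rfl; rw [zpow_zero] at hk; exact h1 (hk ▸ hy)
  have hk_ne1 : k ≠ 1 := by rintro rfl; rw [zpow_one] at hk; exact hyx hk.symm
  have hk_ne : k ≠ n - 1 := by
    rintro rfl
    rw [zpow_sub, hxn, zpow_one, one_mul] at hk
    exact hyx' hk.symm
  have hshift : ∀ e : ℤ, x ^ (e + n) = x ^ e := fun e => by rw [zpow_add, hxn, mul_one]
  have hstep : ∀ a b : ℤ, (x ^ a)⁻¹ * x ^ b = x ^ (b - a) := fun a b => by
    rw [zpow_sub, mul_comm]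
  -- the exponents along the path
  let e : ℤ → ℤ := fun i => if i < n - k then k + 2 + i else n + 1 - i
  have he1 : ∀ i, i < n - k → e i = k + 2 + i := fun i h => if_pos h
  have he2 : ∀ i, ¬ i < n - k → e i = n + 1 - i := fun i h => if_neg h
  refine ⟨fun i => x ^ e i, ⟨fun i hi hi' => ?_, fun g => ?_⟩, ?_⟩
  · simp only [Set.mem_Ico] at hi hi'
    rw [hstep]
    by_cases c1 : i + 1 < n - k
    · rw [he1 i (by omega), he1 _ c1, show k + 2 + (i + 1) - (k + 2 + i) = 1 by ring, zpow_one]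
      exact hx
    · by_cases c2 : i < n - k
      · rw [he1 i c2, he2 _ c1, ← hshift,
          show n + 1 - (i + 1) - (k + 2 + i) + n = k by omega, hk]
        exact hy
      · rw [he2 i c2, he2 _ c1, show n + 1 - (i + 1) - (n + 1 - i) = -1 by ring, zpow_neg_one]
        exact hS x hx
  · obtain ⟨t, ⟨⟨ht0, htn⟩, ht⟩, huniq⟩ := hn g (htop g)
    rw [Subgroup.mem_bot, inv_mul_eq_one] at ht
    have huniq' : ∀ t' : ℤ, 0 ≤ t' → t' < n → x ^ t' = g → t' = t := fun t' h0 h1 h =>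
      huniq t' ⟨⟨h0, h1⟩, by rw [Subgroup.mem_bot, inv_mul_eq_one, h]⟩
    simp only [Subgroup.mem_bot, inv_mul_eq_one]
    obtain ⟨j, hj0, hjn, hj⟩ : ∃ j, 0 ≤ j ∧ j < n ∧ (e j = t ∨ e j = t + n) := by
      by_cases c1 : t < 2
      · by_cases c2 : k + 2 ≤ t + n
        · exact ⟨t + n - k - 2, by omega, by omega, .inr (by rw [he1 _ (by omega)]; ring)⟩
        · omega
      · by_cases c2 : k + 2 ≤ t
        · exact ⟨t - k - 2, by omega, by omega, .inl (by rw [he1 _ (by omega)]; ring)⟩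
        · exact ⟨n + 1 - t, by omega, by omega, .inl (by rw [he2 _ (by omega)]; ring)⟩
    refine ⟨j, ⟨⟨hj0, hjn⟩, ?_⟩, ?_⟩
    · rcases hj with hj | hj
      · rw [hj, ht]
      · rw [hj, hshift, ht]
    · rintro i ⟨⟨hi0, hin⟩, hi⟩
      have hei : e i = t ∨ e i = t + n := by
        have hb : 2 ≤ e i ∧ e i ≤ n + 1 := by
          by_cases c : i < n - k
          · rw [he1 i c]; omega
          · rw [he2 i c]; omega
        by_cases c : e i < n
        · exact .inl (huniq' _ (by omega) c hi)
        · right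
          have := huniq' (e i - n) (by omega) (by omega) (by rw [← hshift, sub_add_cancel, hi])
          omega
      simp only [e] at hj hei
      split_ifs at hj hei <;> omega
  · refine ⟨n - k - 2, 1, -1, ?_, ?_, ?_, ?_, .inl rfl, .inr rfl, fun _ => rfl, ?_, ?_⟩
    · constructor <;> omega
    · constructor <;> omega
    · constructor <;> omega
    · constructor <;> omega
    · dsimp only
      rw [hstep, he1 _ (by omega), he1 _ (by omega)]
      congr 1; ring
    · dsimp only
      rw [hstep, he2 _ (by omega), he2 _ (by omega)]
      congr 1; ring

/-- The theorem, in terms of path transversals of the trivial subgroup. -/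
lemma exists_path_triple {S : Set G} (hSfin : S.Finite) (h1 : (1 : G) ∉ S)
    (hS : ∀ g ∈ S, g⁻¹ ∈ S) (hgen : Subgroup.closure S = ⊤)
    {x y : G} (hx : x ∈ S) (hy : y ∈ S) (hyx : y ≠ x) (hyx' : y ≠ x⁻¹) :
    ∃ I v, IsIndexSet I ∧ IsPathTransversal ⊥ S I v ∧
      HasTriple x I v (Subgroup.zpowers x : Set G).Finite := by
  obtain ⟨J, w, hJ, hw⟩ := exists_pathTransversal hS hSfin subset_rfl
    (⊥ ⊔ Subgroup.zpowers x) (by rw [hgen, sup_top_eq])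
  have hinf : (∀ t : ℤ, x ^ t ∈ (⊥ : Subgroup G) → t = 0) →
      ¬ (Subgroup.zpowers x : Set G).Finite := fun h hfin => by
    refine Set.infinite_range_of_injective (f := fun t : ℤ => x ^ t) (fun a b hab => ?_) hfin
    have := h (a - b) (by
      dsimp only at hab
      rw [Subgroup.mem_bot, zpow_sub, hab, mul_inv_cancel])
    omega
  have hx1 : x ≠ 1 := fun h => h1 (h ▸ hx)
  -- `1 ∈ J` says that `J` has at least two elements, i.e. that `⟨x⟩` is a proper subgroup.
  by_cases hJ1 : (1 : ℤ) ∈ J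
  · rcases exists_powTransversal ⊥ x with ⟨hord, hK⟩ | ⟨n, hn, hxn, hK⟩
    · obtain ⟨I, u, hu, i, δ, ε, h₀, h₁, h₂, h₃, hδ, hε, e₁, e₂⟩ :=
        exists_gridPath_triple hJ hJ1
      exact ⟨I, _, hu.1, hw.grid hS hx hK hu, i, δ, ε, h₀, h₁, h₂, h₃, hδ, hε,
        fun h => absurd h (hinf hord), grid_step x w e₁, grid_step x w e₂⟩
    · have hn2 : 2 ≤ n := by
        by_contra hlt
        have : n = 1 := by omega
        subst this
        rw [zpow_one, Subgroup.mem_bot] at hxn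
        exact hx1 hxn
      have hJ0 : (0 : ℤ) ∈ J := by
        rcases hJ with rfl | ⟨m, hm, rfl⟩
        · trivial
        · constructor <;> omega
      have hu := isGridPath_snake hn hJ
      obtain ⟨s₀, s₁, s₂, s₃⟩ := snake_triple hn2
      have hmem : ∀ i a b : ℤ, snake n i = (a, b) → b ∈ J → i ∈ {i | i / n ∈ J} :=
        fun i a b h hb => by
          have : i / n = b := congrArg Prod.snd h
          simpa [this] using hb
      refine ⟨_, _, hu.1, hw.grid hS hx hK hu, n - 2, 1, -1, hmem _ _ _ s₀ hJ0,
        hmem _ _ _ s₁ hJ0, hmem _ _ _ s₂ hJ1, hmem _ _ _ s₃ hJ1, .inl rfl, .inr rfl,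
        fun _ => rfl, grid_step x w ?_, grid_step x w ?_⟩
      · rw [s₁, s₀]; congr 1; ring
      · rw [s₃, s₂]; congr 1; ring
  · have htop : ∀ g : G, g ∈ (⊥ : Subgroup G) ⊔ Subgroup.zpowers x := by
      have hJ' : ∀ j ∈ J, j = 0 := by
        rcases hJ with rfl | ⟨m, hm, rfl⟩
        · exact absurd trivial hJ1
        · intro j hj
          simp only [Set.mem_Ico] at hj hJ1
          omega
      have h0 : ∀ g, (w 0)⁻¹ * g ∈ (⊥ : Subgroup G) ⊔ Subgroup.zpowers x := fun g => by
        obtain ⟨j, ⟨hj, hg⟩, -⟩ := hw.2 g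
        rwa [hJ' j hj] at hg
      intro g
      have := Subgroup.mul_mem _ (Subgroup.inv_mem _ (h0 1)) (h0 g)
      simpa using this
    rcases exists_powTransversal ⊥ x with ⟨hord, hK⟩ | ⟨n, hn, hxn, hK⟩
    · have hstep : ∀ i : ℤ, (x ^ i)⁻¹ * x ^ (i + 1) = x := fun i => by
        rw [zpow_add_one, inv_mul_cancel_left]
      refine ⟨Set.univ, fun i => x ^ i, .inl rfl, ⟨fun i _ _ => ?_, fun g => hK g (htop g)⟩,
        0, 1, 1, trivial, trivial, trivial, trivial, .inl rfl, .inl rfl,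
        fun h => absurd h (hinf hord), ?_, ?_⟩
      · dsimp only
        rw [hstep]
        exact hx
      · simp
      · simpa using hstep 2
    · obtain ⟨v, hv, i, δ, ε, h₀, h₁, h₂, h₃, hδ, hε, hop, e₁, e₂⟩ :=
        exists_path_cyclic_finite h1 hS hx hy hyx hyx' htop (Subgroup.mem_bot.1 hxn) hK
      exact ⟨_, v, .inr ⟨n, hn, rfl⟩, hv, i, δ, ε, h₀, h₁, h₂, h₃, hδ, hε,
        fun _ => hop trivial, e₁, e₂⟩

end UsefulTriple

/-- Let `G` be an abelian group generated by a finite symmetric set `S`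
with `1 ∉ S`, let `x ∈ S` and suppose some `y ∈ S` satisfies `y ∉ {x, x⁻¹}`. Then
`Cay(G;S)` has a hamiltonian path containing a useful `x`-triple, and if `⟨x⟩` is
finite the path can be chosen to contain a strongly useful `x`-triple. -/
theorem abelian_hamiltonian_path_useful_triple
    {G : Type*} [CommGroup G] (S : Set G) (hSfin : S.Finite)
    (h1 : (1 : G) ∉ S) (hS : S⁻¹ = S) (hgen : Subgroup.closure S = ⊤)
    (x : G) (hx : x ∈ S) (y : G) (hy : y ∈ S) (hyx : y ∉ ({x, x⁻¹} : Set G)) :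
    (∃ (I : Set ℤ) (v : ℤ → G),
      ((Finite G ∧ I = Set.Icc 0 ((Nat.card G : ℤ) - 1)) ∨
        (Infinite G ∧ I = Set.univ)) ∧
      Set.BijOn v I Set.univ ∧
      (∀ i : ℤ, i ∈ I → i + 1 ∈ I → (v i)⁻¹ * v (i + 1) ∈ S) ∧
      -- a useful `x`-triple
      (∃ i : ℤ, i ∈ I ∧ i + 1 ∈ I ∧ i + 2 ∈ I ∧ i + 3 ∈ I ∧
        (v i)⁻¹ * v (i + 1) ∈ ({x, x⁻¹} : Set G) ∧
        (v (i + 2))⁻¹ * v (i + 3) ∈ ({x, x⁻¹} : Set G))) ∧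
    ((Subgroup.zpowers x : Set G).Finite →
      ∃ (I : Set ℤ) (v : ℤ → G),
        ((Finite G ∧ I = Set.Icc 0 ((Nat.card G : ℤ) - 1)) ∨
          (Infinite G ∧ I = Set.univ)) ∧
        Set.BijOn v I Set.univ ∧
        (∀ i : ℤ, i ∈ I → i + 1 ∈ I → (v i)⁻¹ * v (i + 1) ∈ S) ∧
        -- a strongly useful `x`-triple
        (∃ i : ℤ, i ∈ I ∧ i + 1 ∈ I ∧ i + 2 ∈ I ∧ i + 3 ∈ I ∧
          ({(v i)⁻¹ * v (i + 1), (v (i + 2))⁻¹ * v (i + 3)} : Set G)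
            = ({x, x⁻¹} : Set G))) := by
  have hSinv : ∀ g ∈ S, g⁻¹ ∈ S := fun g hg => by
    rw [← hS]
    simpa using hg
  simp only [Set.mem_insert_iff, Set.mem_singleton_iff, not_or] at hyx
  obtain ⟨I, v, hI, hv, i, δ, ε, h₀, h₁, h₂, h₃, hδ, hε, hop, e₁, e₂⟩ :=
    UsefulTriple.exists_path_triple hSfin h1 hSinv hgen hx hy hyx.1 hyx.2
  have hpow : ∀ d : ℤ, d = 1 ∨ d = -1 → x ^ d ∈ ({x, x⁻¹} : Set G) := by
    rintro d (rfl | rfl) <;> simp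
  refine ⟨⟨I, v, UsefulTriple.indexSet_of_bijOn hI hv.bijOn, hv.bijOn, hv.1, i, h₀, h₁, h₂, h₃,
    e₁ ▸ hpow δ hδ, e₂ ▸ hpow ε hε⟩, fun hfin =>
    ⟨I, v, UsefulTriple.indexSet_of_bijOn hI hv.bijOn, hv.bijOn, hv.1, i, h₀, h₁, h₂, h₃, ?_⟩⟩
  rw [e₁, e₂, hop hfin]
  rcases hδ with rfl | rfl
  · simp
  · simp [Set.pair_comm]
end

section
/- Let X be a connected simple graph with at least one edge, and let G be a group of automorphisms of X acting faithfully and transitively on V(X) but not sharply transitively (i.e., the stabilizer of some vertex is non-trivial). Then for every vertex v of X there exists a neighbor u of v such that St_G(u) ≠ St_G(v). -/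
/-!
If all neighbours of one vertex `v` had the stabilizer of `v`, then conjugating by a group element
carrying `v` to `a` shows the same at every vertex `a`. Connectedness then makes all stabilizers
equal, so an element fixing one vertex fixes every vertex, and is trivial by faithfulness. This
contradicts the existence of a non-trivial stabilizer.
-/

/-- if a group `G` acts faithfully and transitively, but not sharply
transitively, on a connected simple graph `X` with at least one edge, then every
vertex has a neighbour with a different stabilizer. -/
theorem exists_neighbor_with_different_stabilizer
    {V : Type*} (X : SimpleGraph V) (hconn : X.Connected)
    (hedge : ∃ u w : V, X.Adj u w)
    (G : Type*) [Group G] [MulAction G V]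
    (hauto : ∀ (g : G) (u w : V), X.Adj u w → X.Adj (g • u) (g • w))
    (hfaithful : ∀ g : G, (∀ x : V, g • x = x) → g = 1)
    (htrans : ∀ u w : V, ∃ g : G, g • u = w)
    (hnotsharp : ∃ w : V, MulAction.stabilizer G w ≠ ⊥) :
    ∀ v : V, ∃ u : V, X.Adj v u ∧
      MulAction.stabilizer G u ≠ MulAction.stabilizer G v := by
  intro v
  by_contra! h
  have hadj : ∀ a b : V, X.Adj a b →
      MulAction.stabilizer G b = MulAction.stabilizer G a := by
    intro a b hab
    obtain ⟨g, rfl⟩ := htrans v a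
    have hv : X.Adj v (g⁻¹ • b) := by simpa using hauto g⁻¹ _ _ hab
    have hb := MulAction.stabilizer_smul_eq_stabilizer_map_conj g (g⁻¹ • b)
    rw [smul_inv_smul, h _ hv] at hb
    rw [hb, MulAction.stabilizer_smul_eq_stabilizer_map_conj]
  have hwalk : ∀ a b : V, X.Walk a b →
      MulAction.stabilizer G b = MulAction.stabilizer G a := by
    intro a b p
    induction p with
    | nil => rfl
    | cons hab _ ih => exact ih.trans (hadj _ _ hab)
  obtain ⟨w, hw⟩ := hnotsharp
  refine hw ((Subgroup.eq_bot_iff_forall _).2 fun g hg => hfaithful g fun x => ?_)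
  obtain ⟨p⟩ := hconn.preconnected w x
  rw [← hwalk w x p] at hg
  exact hg
end

section
/- Let X be a connected, infinite, locally finite simple graph and let G be a group acting faithfully and transitively on X by automorphisms, whose commutator subgroup G' is cyclic of prime order p, generated by an element g. Let v : ℤ → V(X) be a map such that v(i) is adjacent to v(i+1) for all i ∈ ℤ and the G'-orbits G'·v(i), i ∈ ℤ, are pairwise distinct. Suppose k ≥ 1 and v(0) is adjacent in X to g·v(k). Then the induced subgraph of X on the vertex set ⋃_{i=0}^{k} G'·v(i) has a hamiltonian cycle, which moreover can be chosen to contain the edge from v(0) to g·v(k). -/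
/-!
Write `G'` for the commutator subgroup. It is normal, of prime order, and the action is transitive
and faithful, so `G'` acts freely: a nontrivial element fixing one vertex generates `G'`, and by
normality and transitivity it would fix every vertex (`BlockCycle.eq_one_of_smul_eq`).
Hence the block consists of `p * (k + 1)` distinct vertices `g⁻¹ ^ q • v r`, with `q < p`, `r ≤ k`.

Translating the edge from `v 0` to `g • v k` by `g⁻¹` gives an edge from `v k` to `g⁻¹ • v 0`, so
the translates of the path `v 0, …, v k` by `1, g⁻¹, g⁻², …` can be traversed one after another.
The last of them ends at `g⁻¹ ^ (p - 1) • v k = g • v k`, which is adjacent to `v 0`; this given edge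
closes the cycle (`BlockCycle.exists_hamiltonianCycle`).
-/

namespace BlockCycle

/-- The walk `f 0, f 1, …, f n` traced by a sequence of consecutively adjacent vertices. -/
def seqWalk {W : Type*} {H : SimpleGraph W} {f : ℕ → W}
    (hf : ∀ n, H.Adj (f n) (f (n + 1))) : ∀ n, H.Walk (f 0) (f n)
  | 0 => .nil
  | n + 1 => (seqWalk hf n).concat (hf n)

lemma support_seqWalk {W : Type*} {H : SimpleGraph W} {f : ℕ → W}
    (hf : ∀ n, H.Adj (f n) (f (n + 1))) (n : ℕ) :
    (seqWalk hf n).support = (List.range (n + 1)).map f := by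
  induction n with
  | zero => simp [seqWalk]
  | succ n ih =>
    rw [seqWalk, SimpleGraph.Walk.support_concat, ih, List.range_succ (n := n + 1)]
    simp

lemma edges_seqWalk {W : Type*} {H : SimpleGraph W} {f : ℕ → W}
    (hf : ∀ n, H.Adj (f n) (f (n + 1))) (n : ℕ) :
    (seqWalk hf n).edges = (List.range n).map fun i => s(f i, f (i + 1)) := by
  induction n with
  | zero => simp [seqWalk]
  | succ n ih =>
    rw [seqWalk, SimpleGraph.Walk.edges_concat, ih, List.range_succ]
    simp

/-- A sequence of consecutively adjacent vertices whose first `n + 1 ≥ 3` terms enumerate the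
vertex set without repetition, with `f n` adjacent to `f 0`, closes up to a hamiltonian cycle
using the closing edge. -/
lemma exists_hamiltonianCycle {W : Type*} [DecidableEq W] {H : SimpleGraph W} {f : ℕ → W}
    (hf : ∀ n, H.Adj (f n) (f (n + 1))) {n : ℕ} (hn : 2 ≤ n) (hclose : H.Adj (f n) (f 0))
    (hinj : ∀ i ≤ n, ∀ j ≤ n, f i = f j → i = j) (hsurj : ∀ w, ∃ i ≤ n, f i = w) :
    ∃ c : H.Walk (f n) (f n), c.IsHamiltonianCycle ∧ s(f 0, f n) ∈ c.edges := by
  have hnodup : (seqWalk hf n).support.Nodup := by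
    rw [support_seqWalk]
    refine List.Nodup.map_on ?_ List.nodup_range
    intro i hi j hj h
    rw [List.mem_range] at hi hj
    exact hinj i (by omega) j (by omega) h
  refine ⟨.cons hclose (seqWalk hf n), ?_, ?_⟩
  · rw [SimpleGraph.Walk.isHamiltonianCycle_iff_isCycle_and_support_count_tail_eq_one]
    refine ⟨?_, fun w => ?_⟩
    · rw [SimpleGraph.Walk.cons_isCycle_iff]
      refine ⟨(SimpleGraph.Walk.isPath_def _).2 hnodup, ?_⟩
      rw [edges_seqWalk]
      intro hmem
      obtain ⟨i, hi, h⟩ := List.mem_map.1 hmem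
      rw [List.mem_range] at hi
      rcases Sym2.eq_iff.1 h with ⟨h1, -⟩ | ⟨h1, h2⟩
      · have := hinj i (by omega) n le_rfl h1
        omega
      · have := hinj i (by omega) 0 (by omega) h1
        have := hinj (i + 1) (by omega) n le_rfl h2
        omega
    · rw [SimpleGraph.Walk.support_cons, List.tail_cons]
      refine List.count_eq_one_of_mem hnodup ?_
      rw [support_seqWalk]
      obtain ⟨i, hi, rfl⟩ := hsurj w
      exact List.mem_map.2 ⟨i, List.mem_range.2 (by omega), rfl⟩
  · rw [SimpleGraph.Walk.edges_cons, Sym2.eq_swap]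
    exact List.mem_cons_self

/-- If a generator of the commutator subgroup fixes one vertex of a transitive faithful action,
then it is trivial: the commutator subgroup is normal, so it fixes every vertex. -/
lemma eq_one_of_smul_eq {V G : Type*} [Group G] [MulAction G V]
    (hfaithful : ∀ a : G, (∀ x : V, a • x = x) → a = 1)
    (htrans : ∀ u w : V, ∃ a : G, a • u = w)
    {g : G} (hg : Subgroup.zpowers g = commutator G) {u : V} (hu : g • u = u) : g = 1 := by
  refine hfaithful g fun x => ?_
  obtain ⟨a, rfl⟩ := htrans u x
  have hgm : g ∈ commutator G := hg ▸ Subgroup.mem_zpowers g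
  have hmem : a⁻¹ * g * a⁻¹⁻¹ ∈ Subgroup.zpowers g :=
    hg ▸ (inferInstance : (commutator G).Normal).conj_mem g hgm a⁻¹
  have hle : Subgroup.zpowers g ≤ MulAction.stabilizer G u :=
    Subgroup.zpowers_le.2 (MulAction.mem_stabilizer_iff.2 hu)
  have h := MulAction.mem_stabilizer_iff.1 (hle hmem)
  rw [inv_inv, mul_smul, mul_smul, inv_smul_eq_iff] at h
  exact h

end BlockCycle


/-- blocks have hamiltonian cycles through the bouncing edge.
`X` is a connected, infinite, locally finite graph, `G` acts faithfully and
transitively on `X` by automorphisms, `G'` is cyclic of prime order `p` generated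
by `g`, `v : ℤ → V` is a path whose `G'`-orbits are pairwise distinct, `k ≥ 1` and
`v 0` is adjacent to `g • v k`. Then the subgraph induced on
`⋃_{0 ≤ i ≤ k} G'·v(i)` has a hamiltonian cycle containing the edge from `v 0` to
`g • v k`. -/
theorem block_has_hamiltonian_cycle
    {V : Type*} [Infinite V] [DecidableEq V] (X : SimpleGraph V)
    (hconn : X.Connected) (hlf : ∀ u : V, (X.neighborSet u).Finite)
    (G : Type*) [Group G] [MulAction G V]
    (hauto : ∀ (a : G) (u w : V), X.Adj u w → X.Adj (a • u) (a • w))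
    (hfaithful : ∀ a : G, (∀ x : V, a • x = x) → a = 1)
    (htrans : ∀ u w : V, ∃ a : G, a • u = w)
    (p : ℕ) (hp : p.Prime) (hcard : Nat.card (commutator G) = p)
    (g : G) (hg : Subgroup.zpowers g = commutator G)
    (v : ℤ → V) (hadj : ∀ i : ℤ, X.Adj (v i) (v (i + 1)))
    (horb : ∀ i j : ℤ,
      MulAction.orbit (commutator G) (v i) = MulAction.orbit (commutator G) (v j) → i = j)
    (k : ℕ) (hk : 1 ≤ k)
    (hjump : X.Adj (v 0) (g • v (k : ℤ))) :
    ∃ B : Set V,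
      B = {w : V | ∃ i : ℕ, i ≤ k ∧ w ∈ MulAction.orbit (commutator G) (v (i : ℤ))} ∧
      ∃ (hb0 : v 0 ∈ B) (hbk : g • v (k : ℤ) ∈ B) (a : B)
        (c : (SimpleGraph.induce B X).Walk a a),
        c.IsHamiltonianCycle ∧
        s((⟨v 0, hb0⟩ : B), (⟨g • v (k : ℤ), hbk⟩ : B)) ∈ c.edges := by
  have hord : orderOf g = p := by rw [← Nat.card_zpowers, hg, hcard]
  have hgm : g ∈ commutator G := hg ▸ Subgroup.mem_zpowers g
  have hpow : ∀ n : ℕ, g⁻¹ ^ n ∈ commutator G := fun n => pow_mem (inv_mem hgm) n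
  have hordinv : orderOf g⁻¹ = p := by rw [orderOf_inv, hord]
  have hginv : g⁻¹ ^ p = 1 := by rw [← hordinv, pow_orderOf_eq_one]
  have hginvgen : Subgroup.zpowers g⁻¹ = commutator G := by rw [Subgroup.zpowers_inv, hg]
  have hp2 := hp.two_le
  -- The commutator subgroup acts freely: a nontrivial power of `g⁻¹` still generates
  -- the group of prime order `p`.
  have hfree : ∀ (n : ℕ) (u : V), g⁻¹ ^ n • u = u → p ∣ n := by
    intro n u h
    by_contra hnd
    have hcop : (orderOf g⁻¹).Coprime n := by
      rw [hordinv]; exact (Nat.Prime.coprime_iff_not_dvd hp).2 hnd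
    have hgen : Subgroup.zpowers (g⁻¹ ^ n) = commutator G := by
      rw [← hginvgen]
      apply le_antisymm
      · exact Subgroup.zpowers_le.2 (pow_mem (Subgroup.mem_zpowers _) n)
      · obtain ⟨m, hm⟩ := exists_pow_eq_self_of_coprime hcop.symm
        refine Subgroup.zpowers_le.2 ?_
        have hmem := pow_mem (Subgroup.mem_zpowers (g⁻¹ ^ n)) m
        rwa [hm] at hmem
    have h1 := BlockCycle.eq_one_of_smul_eq hfaithful htrans hgen h
    exact hnd (hordinv ▸ orderOf_dvd_of_pow_eq_one h1)
  -- Run along `v 0, …, v k`, step to the translate of `v 0` by `g⁻¹`, and repeat.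
  let F : ℕ → V := fun n => g⁻¹ ^ (n / (k + 1)) • v ((n % (k + 1) : ℕ) : ℤ)
  have hFval : ∀ q r : ℕ, r ≤ k → F (r + (k + 1) * q) = g⁻¹ ^ q • v (r : ℤ) := by
    intro q r hr
    simp only [F]
    rw [Nat.add_mul_div_left _ _ (Nat.succ_pos k), Nat.add_mul_mod_self_left,
      Nat.div_eq_of_lt (by omega), Nat.mod_eq_of_lt (by omega), zero_add]
  have hdecomp : ∀ n : ℕ, ∃ q r : ℕ, r ≤ k ∧ n = r + (k + 1) * q := fun n =>
    ⟨n / (k + 1), n % (k + 1), Nat.lt_succ_iff.1 (Nat.mod_lt _ (Nat.succ_pos k)),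
      (Nat.mod_add_div n (k + 1)).symm⟩
  have hturn : X.Adj (v (k : ℤ)) (g⁻¹ • v 0) := by
    have h := hauto g⁻¹ _ _ hjump
    rw [inv_smul_smul] at h
    exact h.symm
  have hFadj : ∀ n, X.Adj (F n) (F (n + 1)) := by
    intro n
    obtain ⟨q, r, hr, rfl⟩ := hdecomp n
    rcases Nat.lt_or_eq_of_le hr with hlt | rfl
    · rw [show r + (k + 1) * q + 1 = (r + 1) + (k + 1) * q by ring, hFval q r hr,
        hFval q (r + 1) hlt]
      exact_mod_cast hauto _ _ _ (hadj r)
    · rw [show r + (r + 1) * q + 1 = 0 + (r + 1) * (q + 1) by ring, hFval q r hr,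
        hFval (q + 1) 0 (Nat.zero_le _), pow_succ, mul_smul]
      exact hauto _ _ _ hturn
  let B : Set V := {w | ∃ i : ℕ, i ≤ k ∧ w ∈ MulAction.orbit (commutator G) (v (i : ℤ))}
  have hmemB : ∀ (a : G) (i : ℕ), a ∈ commutator G → i ≤ k → a • v (i : ℤ) ∈ B :=
    fun a i ha hi => ⟨i, hi, ⟨⟨a, ha⟩, rfl⟩⟩
  have hFB : ∀ n, F n ∈ B := by
    intro n
    obtain ⟨q, r, hr, rfl⟩ := hdecomp n
    rw [hFval q r hr]
    exact hmemB _ _ (hpow q) hr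
  let f : ℕ → B := fun n => ⟨F n, hFB n⟩
  -- The cycle has `p * (k + 1)` vertices, the last one being `g⁻¹ ^ (p - 1) • v k = g • v k`.
  let N : ℕ := k + (k + 1) * (p - 1)
  have hF0 : F 0 = v 0 := by simp [F]
  have hFN : F N = g • v (k : ℤ) := by
    rw [hFval (p - 1) k le_rfl]
    congr 1
    have h : g⁻¹ ^ (p - 1) * g⁻¹ = 1 := by
      rw [← pow_succ, Nat.sub_add_cancel (by omega), hginv]
    exact mul_inv_eq_one.1 h
  have hlt : ∀ q r : ℕ, r + (k + 1) * q ≤ N → q < p := by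
    intro q r h
    by_contra hq
    have h1 : (k + 1) * ((p - 1) + 1) ≤ (k + 1) * q := Nat.mul_le_mul_left _ (by omega)
    rw [mul_add] at h1
    simp only [N] at h
    omega
  have hFinj : ∀ i ≤ N, ∀ j ≤ N, F i = F j → i = j := by
    intro i hi j hj h
    obtain ⟨q, r, hr, rfl⟩ := hdecomp i
    obtain ⟨q', r', hr', rfl⟩ := hdecomp j
    have hq := hlt _ _ hi
    have hq' := hlt _ _ hj
    rw [hFval q r hr, hFval q' r' hr'] at h
    have horbit : ∀ (n m : ℕ), MulAction.orbit (commutator G) (g⁻¹ ^ n • v (m : ℤ))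
        = MulAction.orbit (commutator G) (v (m : ℤ)) := fun n m =>
      MulAction.orbit_eq_iff.2 ⟨⟨_, hpow n⟩, rfl⟩
    have hrr : r = r' := by
      have := horb r r' (by rw [← horbit q r, ← horbit q' r', h])
      exact_mod_cast this
    subst hrr
    have key : ∀ a b : ℕ, a ≤ b → b < p → g⁻¹ ^ a • v (r : ℤ) = g⁻¹ ^ b • v (r : ℤ) →
        a = b := by
      intro a b hab hb he
      rw [← Nat.add_sub_cancel' hab, pow_add, mul_smul] at he
      have hdvd := hfree _ _ (smul_left_cancel _ he).symm
      have := Nat.eq_zero_of_dvd_of_lt hdvd (by omega)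
      omega
    rcases le_total q q' with hle | hle
    · rw [key q q' hle hq' h]
    · rw [key q' q hle hq h.symm]
  have hFsurj : ∀ w ∈ B, ∃ i ≤ N, F i = w := by
    rintro w ⟨i, hi, ⟨⟨a, ha⟩, rfl⟩⟩
    have hfin : IsOfFinOrder g⁻¹ := orderOf_pos_iff.1 (by omega)
    obtain ⟨n, rfl⟩ := hfin.mem_powers_iff_mem_zpowers.2 (hginvgen ▸ ha)
    obtain ⟨m, hm, hmn⟩ : ∃ m < p, g⁻¹ ^ m = g⁻¹ ^ n :=
      ⟨n % p, Nat.mod_lt _ hp.pos, by rw [← hordinv, pow_mod_orderOf]⟩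
    refine ⟨i + (k + 1) * m, ?_, (hFval m i hi).trans (congrArg (· • v (i : ℤ)) hmn)⟩
    have : (k + 1) * m ≤ (k + 1) * (p - 1) := Nat.mul_le_mul_left _ (by omega)
    simp only [N]
    omega
  have hN : 2 ≤ N := by
    have : (k + 1) * 1 ≤ (k + 1) * (p - 1) := Nat.mul_le_mul_left _ (by omega)
    simp only [N]
    omega
  have hfadj : ∀ n, (SimpleGraph.induce B X).Adj (f n) (f (n + 1)) := hFadj
  have hclose : (SimpleGraph.induce B X).Adj (f N) (f 0) := by
    change X.Adj (F N) (F 0)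
    rw [hF0, hFN]
    exact hjump.symm
  obtain ⟨c, hc, he⟩ := BlockCycle.exists_hamiltonianCycle hfadj hN hclose
    (fun i hi j hj h => hFinj i hi j hj (congrArg Subtype.val h))
    (fun w => by
      obtain ⟨i, hi, h⟩ := hFsurj w w.2
      exact ⟨i, hi, Subtype.ext h⟩)
  refine ⟨B, rfl, hF0 ▸ hFB 0, hmemB g k hgm le_rfl, f N, c, hc, ?_⟩
  convert he using 3
  · exact hF0.symm
  · exact hFN.symm
end

section
/- Let X be a connected, infinite, locally finite simple graph and let G be a group acting faithfully and transitively on X by automorphisms, whose commutator subgroup G' is cyclic of prime order p, generated by an element g. Let v : ℤ → V(X) be a map such that v(i) is adjacent to v(i+1) for all i ∈ ℤ and the G'-orbits G'·v(i), i ∈ ℤ, are pairwise distinct, and suppose k ≥ 1 and v(0) is adjacent in X to g·v(k). Then for every vertex u ∈ G'·v(0) there exists a hamiltonian path of the induced subgraph of X on ⋃_{i=0}^{k} G'·v(i) that starts at u and ends at a vertex of G'·v(k). -/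
/-!
Since `G'` has prime order, the stabiliser in `G'` of a vertex is trivial or all of `G'`. If it
were all of `G'`, then by normality of `G'` and transitivity of `G` every vertex would be fixed by
`G'`, against faithfulness. So `G'` acts freely (`zpow_smul_fixed`) and every orbit `G'·v(i)`
consists of the `p` distinct vertices `g ^ c • v i`.

The path starting at `u = g ^ a • v 0` runs through the translate `g ^ a • (v 0, …, v k)`, uses the
edge from `g ^ a • v k` to `g ^ (a - 1) • v 0` (a translate of the jump edge), runs through
`g ^ (a - 1) • (v 0, …, v k)`, and so on, for `p` translates. Its `n`-th vertex is
`g ^ (a - n / (k + 1)) • v (n % (k + 1))`, and it ends in `g ^ (a - (p - 1)) • v k`.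
-/

/-- A sequence whose consecutive terms are adjacent up to index `N` is traversed by a walk. -/
lemma exists_walk_support_eq_map {W : Type*} (H : SimpleGraph W) (s : ℕ → W) (N : ℕ)
    (hs : ∀ n < N, H.Adj (s n) (s (n + 1))) :
    ∃ q : H.Walk (s 0) (s N), q.support = (List.range (N + 1)).map s := by
  induction N with
  | zero => exact ⟨.nil, by simp⟩
  | succ N ih =>
    obtain ⟨q, hq⟩ := ih fun n hn => hs n (by omega)
    refine ⟨q.concat (hs N (by omega)), ?_⟩
    rw [SimpleGraph.Walk.support_concat, hq, List.range_succ (n := N + 1)]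
    simp

/-- A generator of a prime-order commutator subgroup acts freely: if `g ^ c ≠ 1` fixes
a vertex, then so does all of `G'`, and conjugating, `G'` fixes every vertex. -/
lemma zpow_smul_fixed {V G : Type*} [Group G] [MulAction G V]
    (hfaithful : ∀ a : G, (∀ x : V, a • x = x) → a = 1)
    (htrans : ∀ u w : V, ∃ a : G, a • u = w)
    {p : ℕ} (hp : p.Prime) {g : G} (hg : Subgroup.zpowers g = commutator G)
    (hord : orderOf g = p) (c : ℤ) (x : V) (hx : g ^ c • x = x) : (p : ℤ) ∣ c := by
  by_contra hc
  -- `c` is invertible modulo `p`, so `g` itself is a power of `g ^ c`.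
  have hgx : g • x = x := by
    have hcop : IsCoprime (p : ℤ) c :=
      (Nat.prime_iff_prime_int.mp hp).coprime_iff_not_dvd.mpr hc
    obtain ⟨r, t, hrt⟩ := hcop
    have h1 : g = (g ^ c) ^ t := by
      calc g = g ^ (r * p + t * c) := by rw [hrt, zpow_one]
        _ = (g ^ c) ^ t := by
          rw [zpow_add, mul_comm r, zpow_mul, zpow_natCast, ← hord, pow_orderOf_eq_one, one_zpow,
            one_mul, mul_comm t, zpow_mul]
    have h2 : (g ^ c) ^ t ∈ MulAction.stabilizer G x :=
      Subgroup.zpow_mem _ (MulAction.mem_stabilizer_iff.mpr hx) t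
    rw [← h1] at h2
    exact h2
  have hfix : ∀ h ∈ commutator G, h • x = x := by
    intro h hh
    rw [← hg] at hh
    have : Subgroup.zpowers g ≤ MulAction.stabilizer G x := by
      rw [Subgroup.zpowers_le]
      exact hgx
    exact this hh
  have hg1 : g = 1 := by
    refine hfaithful g fun y => ?_
    obtain ⟨b, rfl⟩ := htrans x y
    have hgm : g ∈ commutator G := hg ▸ Subgroup.mem_zpowers g
    have hn : b⁻¹ * g * b⁻¹⁻¹ ∈ commutator G :=
      (inferInstance : (commutator G).Normal).conj_mem g hgm b⁻¹
    have := hfix _ hn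
    calc g • b • x = b • (b⁻¹ * g * b⁻¹⁻¹) • x := by
          simp only [smul_smul]
          congr 1
          group
      _ = b • x := by rw [this]
  rw [hg1, orderOf_one] at hord
  exact hp.one_lt.ne hord

/-- blocks have hamiltonian paths from any entrance vertex to the
exit. `X` is a connected, infinite, locally finite graph, `G` acts faithfully and
transitively on `X` by automorphisms, `G'` is cyclic of prime order `p` generated
by `g`, `v : ℤ → V` is a path whose `G'`-orbits are pairwise distinct, `k ≥ 1` and
`v 0` is adjacent to `g • v k`. Then for every vertex `u` in the entrance orbit
`G'·v(0)`, the subgraph induced on `⋃_{0 ≤ i ≤ k} G'·v(i)` has a hamiltonian path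
starting at `u` and ending at a vertex of the exit orbit `G'·v(k)`. -/
theorem block_has_hamiltonian_path_entrance_to_exit
    {V : Type*} [Infinite V] [DecidableEq V] (X : SimpleGraph V)
    (hconn : X.Connected) (hlf : ∀ u : V, (X.neighborSet u).Finite)
    (G : Type*) [Group G] [MulAction G V]
    (hauto : ∀ (a : G) (u w : V), X.Adj u w → X.Adj (a • u) (a • w))
    (hfaithful : ∀ a : G, (∀ x : V, a • x = x) → a = 1)
    (htrans : ∀ u w : V, ∃ a : G, a • u = w)
    (p : ℕ) (hp : p.Prime) (hcard : Nat.card (commutator G) = p)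
    (g : G) (hg : Subgroup.zpowers g = commutator G)
    (v : ℤ → V) (hadj : ∀ i : ℤ, X.Adj (v i) (v (i + 1)))
    (horb : ∀ i j : ℤ,
      MulAction.orbit (commutator G) (v i) = MulAction.orbit (commutator G) (v j) → i = j)
    (k : ℕ) (hk : 1 ≤ k)
    (hjump : X.Adj (v 0) (g • v (k : ℤ))) :
    ∃ B : Set V,
      B = {w : V | ∃ i : ℕ, i ≤ k ∧ w ∈ MulAction.orbit (commutator G) (v (i : ℤ))} ∧
      ∀ u ∈ MulAction.orbit (commutator G) (v 0),
        ∃ (hu : u ∈ B) (w : V) (hw : w ∈ MulAction.orbit (commutator G) (v (k : ℤ)))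
          (hwB : w ∈ B)
          (q : (SimpleGraph.induce B X).Walk ⟨u, hu⟩ ⟨w, hwB⟩),
          q.IsHamiltonian := by
  have hord : orderOf g = p := by rw [← hcard, ← hg, Nat.card_zpowers]
  have hfree := zpow_smul_fixed hfaithful htrans hp hg hord
  have hmem : ∀ (c : ℤ) (x : V), g ^ c • x ∈ MulAction.orbit (commutator G) x := fun c x =>
    ⟨⟨g ^ c, hg ▸ Subgroup.zpow_mem_zpowers g c⟩, rfl⟩
  have hpow : ∀ (x w : V), w ∈ MulAction.orbit (commutator G) x → ∃ c : ℤ, g ^ c • x = w := by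
    rintro x _ ⟨⟨h, hh⟩, rfl⟩
    rw [← hg] at hh
    obtain ⟨c, rfl⟩ := hh
    exact ⟨c, rfl⟩
  refine ⟨_, rfl, fun u hu => ?_⟩
  obtain ⟨a, rfl⟩ := hpow _ _ hu
  set B : Set V :=
    {w : V | ∃ i : ℕ, i ≤ k ∧ w ∈ MulAction.orbit (commutator G) (v (i : ℤ))} with hB
  let s : ℕ → B := fun n =>
    ⟨g ^ (a - ((n / (k + 1) : ℕ) : ℤ)) • v ((n % (k + 1) : ℕ) : ℤ),
      n % (k + 1), Nat.lt_succ_iff.mp (Nat.mod_lt _ k.succ_pos), hmem _ _⟩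
  -- The value of `s` at the `i`-th vertex of the `t`-th translate.
  have hs : ∀ t i : ℕ, i ≤ k → (s (i + (k + 1) * t) : V) = g ^ (a - (t : ℤ)) • v (i : ℤ) := by
    intro t i hi
    have h1 : (i + (k + 1) * t) / (k + 1) = t := by
      rw [Nat.add_mul_div_left _ _ k.succ_pos, Nat.div_eq_of_lt (by omega), zero_add]
    have h2 : (i + (k + 1) * t) % (k + 1) = i := by
      rw [Nat.add_mul_mod_self_left, Nat.mod_eq_of_lt (by omega)]
    simp only [s, h1, h2]
  have hdecomp : ∀ n : ℕ, ∃ t i : ℕ, i ≤ k ∧ n = i + (k + 1) * t := fun n =>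
    ⟨n / (k + 1), n % (k + 1), Nat.lt_succ_iff.mp (Nat.mod_lt _ k.succ_pos),
      (Nat.mod_add_div n (k + 1)).symm⟩
  have hsadj : ∀ n, (SimpleGraph.induce B X).Adj (s n) (s (n + 1)) := by
    intro n
    obtain ⟨t, i, hi, rfl⟩ := hdecomp n
    rw [SimpleGraph.comap_adj]
    change X.Adj (s (i + (k + 1) * t) : V) (s (i + (k + 1) * t + 1) : V)
    rcases hi.lt_or_eq with hlt | rfl
    · rw [show i + (k + 1) * t + 1 = (i + 1) + (k + 1) * t by ring, hs t i hi,
        hs t (i + 1) hlt]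
      push_cast
      exact hauto _ _ _ (hadj _)
    · rw [show i + (i + 1) * t + 1 = 0 + (i + 1) * (t + 1) by ring, hs t i le_rfl,
        hs (t + 1) 0 (Nat.zero_le _)]
      have := hauto (g ^ (a - ((t + 1 : ℕ) : ℤ))) _ _ hjump.symm
      rw [smul_smul, ← zpow_add_one] at this
      convert this using 3
      · push_cast
        ring
      · exact Nat.cast_zero
  have hinj : ∀ n < p * (k + 1), ∀ m < p * (k + 1), s n = s m → n = m := by
    intro n hn m hm h
    obtain ⟨t, i, hi, rfl⟩ := hdecomp n
    obtain ⟨t', j, hj, rfl⟩ := hdecomp m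
    have h := congrArg Subtype.val h
    rw [hs t i hi, hs t' j hj] at h
    have hij : (i : ℤ) = j := by
      apply horb
      rw [← MulAction.orbit_eq_iff.mpr (hmem (a - t) (v i)), h,
        MulAction.orbit_eq_iff.mpr (hmem (a - t') (v j))]
    obtain rfl : i = j := by exact_mod_cast hij
    have hfx : g ^ ((t' : ℤ) - t) • v (i : ℤ) = v (i : ℤ) := by
      have h' := congrArg (fun y => g ^ ((t' : ℤ) - a) • y) h
      simp only [smul_smul, ← zpow_add] at h'
      rw [show (t' : ℤ) - a + (a - t) = t' - t by ring,
        show (t' : ℤ) - a + (a - t') = 0 by ring, zpow_zero, one_smul] at h'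
      exact h'
    have ht : t < p := by
      by_contra hcon
      have := Nat.mul_le_mul_left (k + 1) (not_lt.mp hcon)
      rw [mul_comm p] at hn
      omega
    have ht' : t' < p := by
      by_contra hcon
      have := Nat.mul_le_mul_left (k + 1) (not_lt.mp hcon)
      rw [mul_comm p] at hm
      omega
    have h0 := Int.eq_zero_of_abs_lt_dvd (hfree _ _ hfx) (by rw [abs_lt]; omega)
    obtain rfl : t = t' := by omega
    rfl
  have hsurj : ∀ w : B, ∃ n < p * (k + 1), s n = w := by
    rintro ⟨w, i, hi, hw⟩
    obtain ⟨c, rfl⟩ := hpow _ _ hw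
    have hp0 : (0 : ℤ) < p := by exact_mod_cast hp.pos
    obtain ⟨t, ht⟩ := Int.eq_ofNat_of_zero_le (Int.emod_nonneg (a - c) hp0.ne')
    have htp : t < p := by
      have := Int.emod_lt_of_pos (a - c) hp0
      omega
    refine ⟨i + (k + 1) * t, ?_, Subtype.ext ?_⟩
    · have := Nat.mul_le_mul_left (k + 1) (Nat.succ_le_of_lt htp)
      rw [mul_comm p]
      rw [Nat.mul_succ] at this
      omega
    · rw [hs t i hi]
      congr 1
      rw [zpow_eq_zpow_iff_modEq, hord]
      have h1 : a - c ≡ t [ZMOD p] := by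
        rw [← ht]
        exact (Int.mod_modEq _ _).symm
      have h2 := (Int.ModEq.refl a).sub h1
      rw [sub_sub_cancel] at h2
      exact h2.symm
  have hs0 : s 0 = ⟨g ^ a • v 0, 0, Nat.zero_le _, hu⟩ := by
    have := hs 0 0 (Nat.zero_le _)
    apply Subtype.ext
    simpa using this
  obtain ⟨q, hq⟩ := exists_walk_support_eq_map _ s (k + (k + 1) * (p - 1)) fun n _ => hsadj n
  have hN : k + (k + 1) * (p - 1) + 1 = p * (k + 1) := by
    obtain ⟨r, rfl⟩ := Nat.exists_eq_add_of_le' hp.one_le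
    simp only [Nat.add_sub_cancel]
    ring
  rw [hN] at hq
  refine ⟨⟨0, Nat.zero_le _, hu⟩, s (k + (k + 1) * (p - 1)), ?_, Subtype.property _,
    q.copy hs0 rfl, SimpleGraph.Walk.IsPath.isHamiltonian_of_mem (.mk' ?_) fun w => ?_⟩
  · rw [hs _ k le_rfl]
    exact hmem _ _
  · rw [SimpleGraph.Walk.support_copy, hq]
    refine List.Nodup.map_on (fun n hn m hm h => ?_) List.nodup_range
    exact hinj n (List.mem_range.mp hn) m (List.mem_range.mp hm) h
  · rw [SimpleGraph.Walk.support_copy, hq]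
    obtain ⟨n, hn, rfl⟩ := hsurj w
    exact List.mem_map_of_mem (List.mem_range.mpr hn)
end
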